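/- Let p be an odd prime and λ ∈ ℤ_p with λ ≢ 0 (mod p) and λ ≢ 1 (mod p). Let L_λ over 𝔽_p be the Legendre curve y² = x(x−1)(x−λ̄), where λ̄ is the reduction of λ modulo p, let A = p + 1 − #L_λ(𝔽_p), and suppose p ∤ A. Let β ∈ ℤ_p be a p-adic unit with β² − A·β + p = 0. Then for every integer s ≥ 1, Σ_{j=0}^{(p^s−1)/2} C((p^s−1)/2, j)² λ^j ≡ (−1)^{(p−1)/2} · β · Σ_{j=0}^{(p^{s−1}−1)/2} C((p^{s−1}−1)/2, j)² λ^j (mod p^s ℤ_p). -/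

import Mathlib

open Finset

/-- `1` plus the number of affine points of the Legendre curve
`y² = x(x−1)(x−λ̄)` over `𝔽_p`. -/
noncomputable def LCount (p : ℕ) [Fact p.Prime] (lam : ℤ_[p]) : ℕ :=
  1 + (Finset.univ.filter (fun v : ZMod p × ZMod p =>
        v.2 ^ 2 = v.1 * (v.1 - 1) * (v.1 - PadicInt.toZMod lam))).card

open Polynomial

theorem exists_rank_one_add_smul {R W : Type*} [CommRing R] [AddCommGroup W] [Module R W]
    [Module.Free R W] (V : W →ₗ[R] W) (u : W) (c : R)
    (h : ∀ w, ∃ (a : R) (w' : W), V w = a • u + c • w') :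
    ∃ (φ : W →ₗ[R] R) (B : W →ₗ[R] W), V = φ.smulRight u + c • B := by
  choose a w' hw using h
  let b := Module.Free.chooseBasis R W
  refine ⟨b.constr R fun i => a (b i), b.constr R fun i => w' (b i), b.ext fun i => ?_⟩
  simp [hw]

theorem exists_trace_congr {R W : Type*} [CommRing R] [AddCommGroup W] [Module R W]
    [Module.Free R W] [Module.Finite R W] (V : W →ₗ[R] W) (u : W) (c : R)
    (h : ∀ w, ∃ (a : R) (w' : W), V w = a • u + c • w') :
    ∃ (a : R) (w' : W), c ∣ LinearMap.trace R W V - a ∧ V u = a • u + c • w' := by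
  obtain ⟨φ, B, hV⟩ := exists_rank_one_add_smul V u c h
  refine ⟨φ u, B u, ⟨LinearMap.trace R W B, ?_⟩, by simp [hV]⟩
  rw [hV, map_add, map_smul, LinearMap.trace_smulRight]
  simp

/-- If an endomorphism `U` has rank one modulo `π` and `tr (U ^ r) ≡ β ^ r` modulo `π ^ r`, then any
sequence of functionals approximately intertwined by `U` satisfies a Dwork-type congruence. -/
theorem dwork_congr_of_trace {R W : Type*} [CommRing R] [IsDomain R] [IsLocalRing R]
    [AddCommGroup W] [Module R W] [Module.Free R W] [Module.Finite R W] {π : R}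
    (hπ0 : π ≠ 0) (hπ : ¬ IsUnit π) (U : W →ₗ[R] W) (w₀ : W) (T : ℕ → W →ₗ[R] R) (n : ℕ)
    (hT : ∀ s ≤ n, ∀ w, π ^ (s + 1) ∣ T (s + 1) w - T s (U w)) (hT0 : T 0 w₀ = 1)
    (hU : ∀ w, ∃ (a : R) (w' : W), U w = a • w₀ + π • w') {β : R} (hβ : IsUnit β)
    (htr : ∀ r, 1 ≤ r → r ≤ n + 2 → π ^ r ∣ LinearMap.trace R W (U ^ r) - β ^ r) :
    π ^ (n + 1) ∣ T (n + 1) w₀ - β * T n w₀ := by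
  have unit_of_congr : ∀ {x y : R}, IsUnit x → π ∣ y - x → IsUnit y := by
    intro x y hx ⟨t, ht⟩
    have hy : x = y + -(π * t) := by linear_combination -ht
    rw [hy] at hx
    refine (IsLocalRing.isUnit_or_isUnit_of_isUnit_add hx).resolve_right fun hu => hπ ?_
    exact isUnit_of_mul_isUnit_left (by simpa using hu)
  have Usucc : ∀ r w, (U ^ (r + 1)) w = U ((U ^ r) w) := fun r w => by
    rw [pow_succ', Module.End.mul_apply]
  have Uadd : ∀ r s w, (U ^ (r + s)) w = (U ^ r) ((U ^ s) w) := fun r s w => by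
    rw [pow_add, Module.End.mul_apply]
  obtain ⟨c, v, hcβ, hc⟩ : ∃ (c : R) (v : W), π ∣ c - β ∧ U w₀ = c • w₀ + π • v := by
    obtain ⟨c, v, hc, hv⟩ := exists_trace_congr U w₀ π hU
    refine ⟨c, v, ?_, hv⟩
    have := htr 1 le_rfl (by omega)
    simp only [pow_one] at this
    simpa using dvd_sub this hc
  have hcu : IsUnit c := unit_of_congr hβ hcβ
  have hw0 : ∀ r, ∃ (d : R) (w' : W), IsUnit d ∧ (U ^ r) w₀ = d • w₀ + π • w' := by
    intro r
    induction r with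
    | zero => exact ⟨1, 0, isUnit_one, by simp⟩
    | succ r ih =>
      obtain ⟨d, w', hd, h⟩ := ih
      refine ⟨d * c, d • v + U w', hd.mul hcu, ?_⟩
      rw [Usucc, h, map_add, map_smul, map_smul, hc]
      module
  have hrank : ∀ r w, ∃ (a : R) (w' : W), (U ^ (r + 1)) w = a • (U ^ r) w₀ + π ^ (r + 1) • w' := by
    intro r
    induction r with
    | zero => simpa using hU
    | succ r ih =>
      intro w
      obtain ⟨a, w', h⟩ := ih w
      obtain ⟨a', w'', h'⟩ := hU w'
      obtain ⟨d, y, hd, hy⟩ := hw0 (r + 1)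
      obtain ⟨e, he⟩ := hd.exists_left_inv
      refine ⟨a + π ^ (r + 1) * a' * e, w'' - (a' * e) • y, ?_⟩
      have h1 : w₀ = e • (U ^ (r + 1)) w₀ - (e * π) • y := by
        rw [hy, smul_add, smul_smul, he]
        module
      rw [Usucc, h, map_add, map_smul, map_smul, h', ← Usucc]
      nth_rewrite 2 [h1]
      module
  have hQ : ∀ r, r + 1 ≤ n + 2 →
      ∃ w', (U ^ (2 * r + 1)) w₀ = β ^ (r + 1) • (U ^ r) w₀ + π ^ (r + 1) • w' := by
    intro r hr
    obtain ⟨a, w', ⟨t, ht⟩, ha⟩ := exists_trace_congr (U ^ (r + 1)) ((U ^ r) w₀) _ (hrank r)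
    obtain ⟨t', ht'⟩ := htr (r + 1) (by omega) hr
    refine ⟨(t' - t) • (U ^ r) w₀ + w', ?_⟩
    have e : a = β ^ (r + 1) + π ^ (r + 1) * (t' - t) := by linear_combination ht' - ht
    rw [show 2 * r + 1 = (r + 1) + r by ring, Uadd, ha, e]
    module
  set z := U w₀ - β • w₀ with hz
  have hzr : ∀ r, r ≤ n + 1 → ∃ w', (U ^ r) z = π ^ r • w' := by
    intro r hr
    obtain _ | r := r
    · exact ⟨z, by simp⟩
    obtain ⟨x, hx⟩ := hQ r (by omega)
    obtain ⟨y, hy⟩ := hQ (r + 1) (by omega)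
    obtain ⟨e, he⟩ := (hβ.pow (r + 1)).exists_left_inv
    have h2 : (U ^ (2 * (r + 1) + 1)) w₀ =
        β ^ (r + 1) • (U ^ (r + 2)) w₀ + π ^ (r + 1) • (U ^ 2) x := by
      rw [show 2 * (r + 1) + 1 = 2 + (2 * r + 1) by ring, Uadd, hx, map_add, map_smul, map_smul,
        ← Uadd, add_comm 2 r]
    refine ⟨e • (π • y - (U ^ 2) x), ?_⟩
    have h3 : β ^ (r + 1) • (U ^ (r + 2)) w₀ =
        β ^ (r + 2) • (U ^ (r + 1)) w₀ + π ^ (r + 1) • (π • y - (U ^ 2) x) := by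
      have h4 := h2.symm.trans hy
      rw [eq_sub_of_add_eq h4]
      module
    have h5 : (U ^ (r + 1)) z = (U ^ (r + 2)) w₀ - β • (U ^ (r + 1)) w₀ := by
      rw [hz, map_sub, map_smul, show r + 2 = (r + 1) + 1 from rfl, Uadd (r + 1) 1, pow_one]
    have h6 : β ^ (r + 1) • (U ^ (r + 1)) z = π ^ (r + 1) • (π • y - (U ^ 2) x) := by
      rw [h5, smul_sub, h3]
      module
    rw [smul_comm, ← h6, smul_smul, he, one_smul]
  obtain ⟨z', hz'⟩ : ∃ z', z = π • z' := by
    obtain ⟨t, ht⟩ := hcβ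
    refine ⟨t • w₀ + v, ?_⟩
    rw [hz, hc, eq_add_of_sub_eq ht]
    module
  have hz'r : ∀ r, r ≤ n → ∃ w', (U ^ r) z' = π ^ r • w' := by
    intro r hr
    obtain _ | r := r
    · exact ⟨z', by simp⟩
    obtain ⟨a, w', ha⟩ := hrank r z'
    obtain ⟨y, hy⟩ := hzr (r + 2) (by omega)
    obtain ⟨d, x, hd, hx⟩ := hw0 (r + 1)
    have hTu : IsUnit (T 0 ((U ^ (r + 1)) w₀)) :=
      unit_of_congr hd ⟨T 0 x, by rw [hx]; simp [hT0]⟩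
    have h1 : π • a • (U ^ (r + 1)) w₀ = π • π ^ (r + 1) • (y - U w') := by
      rw [hz', map_smul, Usucc (r + 1), ha, map_add, map_smul, map_smul, ← Usucc] at hy
      rw [smul_add] at hy
      rw [eq_sub_of_add_eq hy]
      module
    have h2 := congrArg (T 0) (smul_right_injective W hπ0 h1)
    simp only [map_smul, smul_eq_mul] at h2
    have h3 : π ^ (r + 1) ∣ a := (hTu.dvd_mul_right).1 ⟨_, h2⟩
    obtain ⟨b, rfl⟩ := h3
    exact ⟨b • (U ^ r) w₀ + w', by rw [ha]; module⟩
  have key : ∀ s, s ≤ n → ∀ y : W, (∀ r, r ≤ s → ∃ w', (U ^ r) y = π ^ r • w') →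
      π ^ s ∣ T s y := by
    intro s
    induction s with
    | zero => simp
    | succ s ih =>
      intro hs y hy
      obtain ⟨x, hx⟩ := hy 1 (by omega)
      simp only [pow_one] at hx
      have h1 : π ^ s ∣ T s x := by
        refine ih (by omega) x fun r hr => ?_
        obtain ⟨w', hw'⟩ := hy (r + 1) (by omega)
        refine ⟨w', smul_right_injective W hπ0 ?_⟩
        have : π • (U ^ r) x = (U ^ (r + 1)) y := by rw [Uadd, pow_one, hx, map_smul]
        change π • (U ^ r) x = π • π ^ r • w'
        rw [this, hw', smul_smul, pow_succ']
      have h2 := hT s (by omega) y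
      rw [hx, map_smul, smul_eq_mul] at h2
      have h3 : π ^ (s + 1) ∣ π * T s x := by rw [pow_succ']; exact mul_dvd_mul_left _ h1
      simpa using dvd_add h2 h3
  have h1 : π ^ (n + 1) ∣ T n z := by
    rw [hz', map_smul, smul_eq_mul, pow_succ']
    exact mul_dvd_mul_left _ (key n le_rfl z' hz'r)
  have h2 := dvd_add (hT n le_rfl w₀) h1
  rw [hz, map_sub, map_smul, smul_eq_mul] at h2
  convert h2 using 1
  ring

section Cartier

variable {R : Type*} [CommRing R]

/-- The linear map sending a polynomial `f` to the polynomial whose coefficient of index `j` is the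
coefficient of `f` of index `q * j + (q - 1) / 2` (and to `0` when `q = 0`). -/
noncomputable def cartier (q : ℕ) : R[X] →ₗ[R] R[X] :=
  if hq : 0 < q then
    (Polynomial.basisMonomials R).repr.symm.toLinearMap ∘ₗ
      Finsupp.lcomapDomain (fun j => q * j + (q - 1) / 2)
        (fun _ _ h => Nat.eq_of_mul_eq_mul_left hq (Nat.add_right_cancel h)) ∘ₗ
      (Polynomial.basisMonomials R).repr.toLinearMap
  else 0

theorem coeff_cartier {q : ℕ} (hq : 0 < q) (f : R[X]) (j : ℕ) :
    (cartier q f).coeff j = f.coeff (q * j + (q - 1) / 2) := by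
  have h : ∀ (g : R[X]) (i : ℕ), (Polynomial.basisMonomials R).repr g i = g.coeff i :=
    fun _ _ => rfl
  rw [← h, cartier, dif_pos hq]
  simp only [LinearMap.comp_apply, LinearEquiv.coe_coe, LinearEquiv.apply_symm_apply]
  rfl

theorem natDegree_cartier_le {q : ℕ} (hq : 0 < q) {f : R[X]} {D : ℕ}
    (hf : f.natDegree < q * (D + 1) + (q - 1) / 2) : (cartier q f).natDegree ≤ D := by
  rw [natDegree_le_iff_coeff_eq_zero]
  intro j hj
  rw [coeff_cartier hq]
  refine coeff_eq_zero_of_natDegree_lt (hf.trans_le ?_)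
  have := Nat.mul_le_mul_left q (Nat.succ_le_of_lt hj)
  simp only [Nat.succ_eq_add_one] at this
  omega

theorem cartier_expand_mul {q : ℕ} (hq : 0 < q) (a f : R[X]) :
    cartier q (expand R q a * f) = a * cartier q f := by
  induction a using Polynomial.induction_on' with
  | add a b ha hb => rw [map_add, add_mul, map_add, ha, hb, add_mul]
  | monomial n c =>
    ext j
    rw [coeff_cartier hq, expand_monomial, ← C_mul_X_pow_eq_monomial, ← C_mul_X_pow_eq_monomial,
      mul_assoc, mul_assoc, coeff_C_mul, coeff_C_mul, coeff_X_pow_mul', coeff_X_pow_mul']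
    by_cases h : n ≤ j
    · obtain ⟨i, rfl⟩ := Nat.exists_eq_add_of_le h
      rw [if_pos h, if_pos (by
        rw [mul_comm n q, mul_add]; omega), coeff_cartier hq]
      congr 2
      rw [Nat.add_sub_cancel_left, mul_add, mul_comm n q, add_assoc, Nat.add_sub_cancel_left]
    · rw [if_neg h, if_neg]
      have h1 := Nat.mul_le_mul_left q (Nat.succ_le_of_lt (not_le.1 h))
      rw [Nat.succ_eq_add_one, mul_add, mul_one] at h1
      have : (q - 1) / 2 < q := by omega
      rw [mul_comm n q]
      omega

theorem cartier_cartier {q r : ℕ} (hq : Odd q) (hr : Odd r) (f : R[X]) :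
    cartier r (cartier q f) = cartier (r * q) f := by
  ext j
  rw [coeff_cartier hr.pos, coeff_cartier hq.pos, coeff_cartier (hr.mul hq).pos]
  congr 1
  obtain ⟨a, rfl⟩ := hq
  obtain ⟨b, rfl⟩ := hr
  have h1 : (2 * b + 1) * (2 * a + 1) - 1 = 2 * ((2 * a + 1) * b + a) := by
    rw [Nat.sub_eq_iff_eq_add (by nlinarith)]; ring
  rw [h1]
  simp only [Nat.add_sub_cancel, Nat.mul_div_cancel_left _ (Nat.zero_lt_two)]
  ring

/-- The operator `f ↦ cartier q (H * f)`. -/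
noncomputable def twistedCartier (q : ℕ) (H : R[X]) : R[X] →ₗ[R] R[X] :=
  cartier q ∘ₗ LinearMap.mulLeft R H

theorem twistedCartier_apply (q : ℕ) (H f : R[X]) :
    twistedCartier q H f = cartier q (H * f) := rfl

theorem twistedCartier_pow {q : ℕ} (hq : Odd q) (H : R[X]) (r : ℕ) (f : R[X]) :
    (twistedCartier q H ^ r) f =
      cartier (q ^ r) ((∏ i ∈ range r, expand R (q ^ i) H) * f) := by
  induction r generalizing f with
  | zero => ext j; simp [coeff_cartier]
  | succ r ih =>
    rw [pow_succ, Module.End.mul_apply, ih, twistedCartier_apply, ← cartier_expand_mul hq.pos,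
      cartier_cartier hq hq.pow, prod_range_succ', ← mul_assoc, map_prod, pow_succ]
    simp [expand_expand, pow_succ']

end Cartier

section Lattice

theorem trace_eq_of_intertwine {R V W : Type*} [CommRing R] [IsDomain R] [AddCommGroup V]
    [Module R V] [Module.Free R V] [Module.Finite R V] [AddCommGroup W] [Module R W]
    [Module.Free R W] [Module.Finite R W] (i : W →ₗ[R] V) (κ : V →ₗ[R] W) {e : R} (he : e ≠ 0)
    (h1 : i ∘ₗ κ = e • LinearMap.id) (h2 : κ ∘ₗ i = e • LinearMap.id)
    (u : W →ₗ[R] W) (v : V →ₗ[R] V) (huv : i ∘ₗ u = v ∘ₗ i) :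
    LinearMap.trace R W u = LinearMap.trace R V v := by
  refine mul_left_cancel₀ he ?_
  have h3 : LinearMap.trace R W (u ∘ₗ (κ ∘ₗ i)) = LinearMap.trace R V ((v ∘ₗ i) ∘ₗ κ) := by
    rw [← huv, ← LinearMap.comp_assoc, LinearMap.trace_comp_comm', LinearMap.comp_assoc]
  rw [h2, LinearMap.comp_assoc, h1] at h3
  simpa [LinearMap.comp_smul] using h3

theorem natCast_dvd_pow_sub_expand (p : ℕ) [Fact p.Prime] (F : ℤ_[p][X]) :
    ∃ g : ℤ_[p][X], F ^ p = expand _ p F + C (p : ℤ_[p]) * g ∧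
      g.natDegree ≤ p * F.natDegree := by
  have hp0 : (p : ℤ_[p]) ≠ 0 := Nat.cast_ne_zero.2 (Fact.out : p.Prime).ne_zero
  have h : C (p : ℤ_[p]) ∣ F ^ p - expand _ p F := by
    rw [C_dvd_iff_dvd_coeff]
    intro i
    rw [← Ideal.mem_span_singleton, ← PadicInt.maximalIdeal_eq_span_p, ← PadicInt.ker_toZMod,
      RingHom.mem_ker, ← coeff_map, Polynomial.map_sub, Polynomial.map_pow, map_expand,
      ZMod.expand_card, sub_self, coeff_zero]
  obtain ⟨g, hg⟩ := h
  refine ⟨g, by rw [← hg]; ring, ?_⟩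
  rw [← natDegree_C_mul hp0, ← hg]
  refine (natDegree_sub_le _ _).trans (max_le natDegree_pow_le ?_)
  rw [natDegree_expand, mul_comm]

theorem exists_pow_eq_factorial_mul (p : ℕ) [Fact p.Prime] {i : ℕ} (hi : i ≠ 0) :
    ∃ t : ℤ_[p], (p : ℤ_[p]) ^ i = i.factorial * p * t := by
  obtain ⟨v, m, hm, h⟩ := Nat.exists_eq_pow_mul_and_not_dvd i.factorial_ne_zero p
    (Fact.out : p.Prime).ne_one
  have hlt : v < i := lt_of_le_of_lt
    ((padicValNat_dvd_iff_le i.factorial_ne_zero).1 ⟨m, h⟩) (padicValNat_factorial_lt_of_ne_zero p hi)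
  obtain ⟨c, rfl⟩ := Nat.exists_eq_add_of_lt hlt
  have hu : IsUnit (m : ℤ_[p]) := by
    rw [PadicInt.isUnit_iff, PadicInt.norm_natCast_eq_one_iff]
    exact (Nat.Prime.coprime_iff_not_dvd Fact.out).2 hm
  obtain ⟨t, ht⟩ := hu.exists_right_inv
  refine ⟨t * p ^ c, ?_⟩
  rw [h]
  push_cast
  linear_combination (-(p : ℤ_[p]) ^ (v + c + 1)) * ht

theorem dvd_descFactorial_of_dvd {p n j l : ℕ} (hl : l < j) (h : p ∣ n - l) :
    p ∣ n.descFactorial j := by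
  rw [Nat.descFactorial_eq_prod_range]
  exact h.trans (dvd_prod_of_mem _ (mem_range.2 hl))

variable {R : Type*} [CommRing R]

/-- The polynomials `f` such that `f * F ^ (-k)` is a combination of the functions
`k (k - 1) ⋯ (k - m + 1) * A * F ^ (-m)` with `A` of degree at most `3 m`. -/
noncomputable def poleLattice (F : R[X]) (k : ℕ) : Submodule R R[X] :=
  Submodule.span R {w | ∃ (m : ℕ) (A : R[X]), m ≤ k ∧ A.natDegree ≤ 3 * m ∧
    w = C (k.descFactorial m : R) * (A * F ^ (k - m))}

theorem mem_poleLattice {F : R[X]} {k m : ℕ} (hm : m ≤ k) {A : R[X]} (hA : A.natDegree ≤ 3 * m) :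
    C (k.descFactorial m : R) * (A * F ^ (k - m)) ∈ poleLattice F k :=
  Submodule.subset_span ⟨m, A, hm, hA, rfl⟩

theorem pow_mem_poleLattice (F : R[X]) (k : ℕ) : F ^ k ∈ poleLattice F k := by
  simpa using mem_poleLattice (F := F) (k := k) (m := 0) (A := 1) (by simp) (by simp)

theorem mem_degreeLT_iff_natDegree_le {n : ℕ} {f : R[X]} :
    f ∈ degreeLT R (n + 1) ↔ f.natDegree ≤ n := by
  rw [mem_degreeLT, degree_lt_iff_coeff_zero, natDegree_le_iff_coeff_eq_zero]
  rfl

theorem poleLattice_le {F : R[X]} (hF : F.natDegree ≤ 2) (k : ℕ) :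
    poleLattice F k ≤ degreeLT R (3 * k + 1) := by
  refine Submodule.span_le.2 ?_
  rintro _ ⟨m, A, hm, hA, rfl⟩
  rw [SetLike.mem_coe, mem_degreeLT_iff_natDegree_le]
  have h1 := natDegree_C_mul_le (k.descFactorial m : R) (A * F ^ (k - m))
  have h2 := natDegree_mul_le (p := A) (q := F ^ (k - m))
  have h3 := natDegree_pow_le_of_le (k - m) hF
  omega

theorem descFactorial_smul_mem_poleLattice (F : R[X]) {k : ℕ} {f : R[X]}
    (hf : f ∈ degreeLT R (3 * k + 1)) :
    (k.descFactorial k : R) • f ∈ poleLattice F k := by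
  have h : f.natDegree ≤ 3 * k := mem_degreeLT_iff_natDegree_le.1 hf
  simpa [smul_eq_C_mul] using mem_poleLattice (F := F) le_rfl h

/-- Modulo `p`, the twisted Cartier operator has rank one on `poleLattice F k`. -/
theorem twistedCartier_poleLattice {p : ℕ} [Fact p.Prime] {h k : ℕ} (hp : p = 2 * h + 1)
    (hk : p ∣ 2 * k + 1) {F : ℤ_[p][X]} (hF : F.natDegree ≤ 2) {w : ℤ_[p][X]}
    (hw : w ∈ poleLattice F k) :
    ∃ a : ℤ_[p], ∃ w' ∈ poleLattice F k,
      twistedCartier p (F ^ (h * (2 * k + 1))) w = a • F ^ k + (p : ℤ_[p]) • w' := by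
  induction hw using Submodule.span_induction with
  | zero => exact ⟨0, 0, zero_mem _, by simp⟩
  | add x y _ _ hx hy =>
    obtain ⟨a, x', hx', hx⟩ := hx
    obtain ⟨b, y', hy', hy⟩ := hy
    exact ⟨a + b, x' + y', add_mem hx' hy', by rw [map_add, hx, hy]; module⟩
  | smul c x _ hx =>
    obtain ⟨a, x', hx', hx⟩ := hx
    exact ⟨c * a, c • x', Submodule.smul_mem _ _ hx', by rw [map_smul, hx]; module⟩
  | mem x hx =>
    obtain ⟨m, A, hm, hA, rfl⟩ := hx
    have hp0 : 0 < p := (Fact.out : p.Prime).pos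
    have hh : 1 ≤ h := by
      have := (Fact.out : p.Prime).two_le
      omega
    have hhalf : (p - 1) / 2 = h := by omega
    obtain ⟨g, hg, hgdeg⟩ := natCast_dvd_pow_sub_expand p F
    set m' := (m + h) / p with hm'
    have hm'1 : p * m' ≤ m + h := Nat.mul_div_le _ _
    have hm'2 : m ≤ p * m' + h := by
      have := Nat.lt_mul_div_succ (m + h) hp0
      rw [← hm', mul_add, mul_one] at this
      omega
    have hm'm : m' ≤ m := by
      rw [hp] at hm'1
      by_contra hlt
      have := Nat.mul_le_mul_left (2 * h + 1) (Nat.succ_le_of_lt (not_le.1 hlt))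
      nlinarith
    obtain ⟨c, hc⟩ : ∃ c, p * m' + h = m + c := Nat.exists_eq_add_of_le hm'2
    have hexp : h * (2 * k + 1) + (k - m) = p * (k - m') + c := by
      zify [hm, hm'm.trans hm] at *
      rw [hp] at hc ⊢
      linarith
    set K := k - m' with hK
    set ψ : ℕ → ℤ_[p][X] := fun i => cartier p (g ^ i * F ^ c * A) with hψ
    have hψdeg : ∀ i, (ψ i).natDegree ≤ 2 * i + 3 * m' := by
      intro i
      refine natDegree_cartier_le hp0 ?_
      have h1 := natDegree_mul_le (p := g ^ i * F ^ c) (q := A)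
      have h2 := natDegree_mul_le (p := g ^ i) (q := F ^ c)
      have h3 := natDegree_pow_le_of_le i (hgdeg.trans (Nat.mul_le_mul_left p hF))
      have h4 := natDegree_pow_le_of_le c hF
      rw [hhalf]
      have h5 : i * (p * 2) = p * (2 * i) := by ring
      have h6 : p * (2 * i + 3 * m' + 1) = p * (2 * i) + 3 * (p * m') + p := by ring
      omega
    have hU : twistedCartier p (F ^ (h * (2 * k + 1)))
          (C (k.descFactorial m : ℤ_[p]) * (A * F ^ (k - m))) =
        ∑ i ∈ range (K + 1),
          C ((k.descFactorial m : ℤ_[p]) * K.choose i * p ^ i) * (ψ i * F ^ (K - i)) := by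
      have h1 : F ^ (h * (2 * k + 1)) * (C (k.descFactorial m : ℤ_[p]) * (A * F ^ (k - m))) =
          ∑ i ∈ range (K + 1), ((k.descFactorial m : ℤ_[p]) * K.choose i * p ^ i) •
            (expand _ p (F ^ (K - i)) * (g ^ i * F ^ c * A)) := by
        have h2 : F ^ (h * (2 * k + 1)) * F ^ (k - m) = (F ^ p) ^ K * F ^ c := by
          rw [← pow_add, hexp, pow_add, pow_mul]
        calc _ = C (k.descFactorial m : ℤ_[p]) * (F ^ (h * (2 * k + 1)) * F ^ (k - m)) * A := by
              ring
          _ = _ := by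
            rw [h2, hg, add_comm, add_pow, sum_mul, mul_sum, sum_mul]
            refine sum_congr rfl fun i _ => ?_
            rw [smul_eq_C_mul, map_pow]
            simp only [map_mul, map_pow, map_natCast]
            ring
      rw [twistedCartier_apply, h1, map_sum]
      refine sum_congr rfl fun i _ => ?_
      rw [map_smul, cartier_expand_mul hp0, smul_eq_C_mul, mul_comm (F ^ (K - i))]
    have hdesc : (k.descFactorial m : ℤ_[p]) = K.descFactorial (m - m') * k.descFactorial m' := by
      rw [← Nat.descFactorial_mul_descFactorial hm'm, Nat.cast_mul]
    have hterm : ∀ i ∈ range K, ∃ w' ∈ poleLattice F k,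
        C ((k.descFactorial m : ℤ_[p]) * K.choose (i + 1) * p ^ (i + 1)) *
          (ψ (i + 1) * F ^ (K - (i + 1))) = (p : ℤ_[p]) • w' := by
      intro i hi
      obtain ⟨t, ht⟩ := exists_pow_eq_factorial_mul p (Nat.succ_ne_zero i)
      have hi' := mem_range.1 hi
      have h1 : m' + (i + 1) ≤ k := by omega
      have h2 := mem_poleLattice (F := F) h1 ((hψdeg (i + 1)).trans (by omega))
      refine ⟨_, Submodule.smul_mem _ (K.descFactorial (m - m') * t) h2, ?_⟩
      have h3 : (k.descFactorial (m' + (i + 1)) : ℤ_[p]) =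
          (i + 1).factorial * K.choose (i + 1) * k.descFactorial m' := by
        rw [← Nat.descFactorial_mul_descFactorial (Nat.le_add_right m' (i + 1)),
          Nat.add_sub_cancel_left, ← hK, Nat.descFactorial_eq_factorial_mul_choose]
        push_cast
        ring
      rw [ht, h3, hdesc, show k - (m' + (i + 1)) = K - (i + 1) by omega]
      simp only [smul_eq_C_mul, map_mul, Nat.succ_eq_add_one]
      ring
    have hzero : ∃ a : ℤ_[p], ∃ w' ∈ poleLattice F k,
        C (k.descFactorial m : ℤ_[p]) * (ψ 0 * F ^ K) = a • F ^ k + (p : ℤ_[p]) • w' := by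
      rcases Nat.eq_zero_or_pos m' with h0 | hpos
      · have hd : (ψ 0).natDegree = 0 := by
          have := hψdeg 0
          omega
        rw [eq_C_of_natDegree_eq_zero hd, hK, h0]
        exact ⟨(k.descFactorial m : ℤ_[p]) * (ψ 0).coeff 0, 0, zero_mem _, by
          rw [smul_eq_C_mul, map_mul]; simp [mul_assoc]⟩
      · obtain ⟨b, hb⟩ := Nat.exists_eq_add_of_le' hpos
        have hdvd : p ∣ K.descFactorial (m - m') := by
          have hpm : p * m' = p * b + p := by rw [hb]; ring
          have hpb : b ≤ p * b := Nat.le_mul_of_pos_left _ hp0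
          refine dvd_descFactorial_of_dvd (l := p * b + h - m') (by omega) ?_
          have hodd : Nat.Coprime p 2 := by
            rw [hp]; simp
          refine hodd.dvd_of_dvd_mul_left ?_
          have : 2 * (K - (p * b + h - m')) = (2 * k + 1) - p * (2 * b + 1) := by
            have : p * (2 * b + 1) = 2 * (p * b) + p := by ring
            omega
          rw [this]
          exact Nat.dvd_sub hk (Dvd.intro _ rfl)
        obtain ⟨t, ht⟩ := hdvd
        have h2 := mem_poleLattice (F := F) (hm'm.trans hm) ((hψdeg 0).trans (by omega))
        refine ⟨0, _, Submodule.smul_mem _ (t : ℤ_[p]) h2, ?_⟩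
        rw [hdesc, ht, ← hK]
        simp only [smul_eq_C_mul, map_mul, Nat.cast_mul]
        simp only [map_zero]
        ring
    obtain ⟨a, w₀, hw₀, h0⟩ := hzero
    choose! w' hw' hw'' using hterm
    refine ⟨a, w₀ + ∑ i ∈ range K, w' i, add_mem hw₀ (sum_mem hw'), ?_⟩
    rw [hU, sum_range_succ', sum_congr rfl hw'']
    simp only [Nat.choose_zero_right, Nat.cast_one, mul_one, pow_zero, Nat.sub_zero, h0,
      smul_add, smul_sum]
    abel

end Lattice

section Truncation

variable {R : Type*} [CommRing R]

theorem exists_X_pow_dvd_mul_sub_one {F : R[X]} (hF : F.coeff 0 = 1) (L : ℕ) :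
    ∃ J : R[X], X ^ L ∣ F * J - 1 := by
  obtain ⟨G, hG⟩ : X ∣ 1 - F := X_dvd_iff.2 (by simp [hF])
  refine ⟨∑ i ∈ range L, (X * G) ^ i, ?_⟩
  have h : F = 1 - X * G := by rw [← hG]; ring
  rw [h, mul_neg_geom_sum, mul_pow]
  exact ⟨-G ^ L, by ring⟩

theorem mk_X_pow_eq_one {F J : R[X]} {L : ℕ} (h : X ^ L ∣ F * J - 1) {I : Ideal R[X]}
    (hI : X ^ L ∈ I) : Ideal.Quotient.mk I F * Ideal.Quotient.mk I J = 1 := by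
  rw [← map_mul, ← map_one (Ideal.Quotient.mk I), Ideal.Quotient.mk_eq_mk_iff_sub_mem]
  exact I.mem_of_dvd h hI

theorem dvd_coeff_of_mem_span {x : R} {L : ℕ} {f : R[X]} (hf : f ∈ Ideal.span {C x, X ^ L})
    (g : R[X]) {i : ℕ} (hi : i < L) : x ∣ (f * g).coeff i := by
  obtain ⟨a, b, rfl⟩ := Ideal.mem_span_pair.1 hf
  rw [show (a * C x + b * X ^ L) * g = C x * (a * g) + (b * g) * X ^ L by ring, coeff_add,
    coeff_C_mul, coeff_mul_X_pow', if_neg hi.not_ge, add_zero]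
  exact Dvd.intro _ rfl

/-- Taking a coefficient of `w * J ^ e`, where `J` is inverse to `F` modulo a power of `X`,
is compatible with the twisted Cartier operator. -/
theorem natCast_pow_dvd_coeff_sub_coeff_twistedCartier {p : ℕ} [Fact p.Prime] {F J : ℤ_[p][X]}
    {L a a' d e e' s : ℕ} (hJ : X ^ L ∣ F * J - 1) (ha : p * a + (p - 1) / 2 = a') (haL : a' < L)
    (hd : d + e' = p * e) (he : p ^ s ∣ e) (w : ℤ_[p][X]) :
    (p : ℤ_[p]) ^ (s + 1) ∣
      (w * J ^ e').coeff a' - (twistedCartier p (F ^ d) w * J ^ e).coeff a := by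
  have hp0 : 0 < p := (Fact.out : p.Prime).pos
  have h1 : (twistedCartier p (F ^ d) w * J ^ e).coeff a =
      (expand _ p J ^ e * F ^ d * w).coeff a' := by
    rw [twistedCartier_apply, mul_comm, ← cartier_expand_mul hp0, coeff_cartier hp0, ha, map_pow,
      mul_assoc]
  have h2 : (w * J ^ e').coeff a' - (expand _ p J ^ e * F ^ d * w).coeff a' =
      ((J ^ e' - expand _ p J ^ e * F ^ d) * w).coeff a' := by
    rw [← coeff_sub]
    congr 1
    ring
  rw [h1, h2]
  refine dvd_coeff_of_mem_span (L := L) ?_ w haL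
  set I : Ideal ℤ_[p][X] := Ideal.span {C ((p : ℤ_[p]) ^ (s + 1)), X ^ L} with hI
  have hX : (X : ℤ_[p][X]) ^ L ∈ I := Ideal.subset_span (by simp)
  have hC : C ((p : ℤ_[p]) ^ (s + 1)) ∈ I := Ideal.subset_span (by simp)
  have hJ' : X ^ L ∣ expand _ p F * expand _ p J - 1 := by
    have h := map_dvd (expand ℤ_[p] p) hJ
    rw [map_sub, map_mul, map_one, map_pow, expand_X, ← pow_mul] at h
    exact (pow_dvd_pow _ (Nat.le_mul_of_pos_left _ hp0)).trans h
  have hF1 := mk_X_pow_eq_one hJ hX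
  have hF2 := mk_X_pow_eq_one hJ' hX
  have hF3 : (Ideal.Quotient.mk I F) ^ (p * e) = (Ideal.Quotient.mk I (expand _ p F)) ^ e := by
    obtain ⟨b, rfl⟩ := he
    rw [← map_pow, ← map_pow, Ideal.Quotient.mk_eq_mk_iff_sub_mem]
    refine I.mem_of_dvd ?_ hC
    obtain ⟨g, hg, -⟩ := natCast_dvd_pow_sub_expand p F
    have h := dvd_sub_pow_of_dvd_sub (p := p) (a := F ^ p) (b := expand _ p F)
      ⟨g, by rw [hg, map_natCast]; ring⟩ s
    rw [pow_mul, pow_mul (F ^ p), pow_mul (expand _ p F), map_pow, map_natCast]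
    exact h.trans (sub_dvd_pow_sub_pow _ _ b)
  rw [← Ideal.Quotient.mk_eq_mk_iff_sub_mem, map_mul, map_pow, map_pow, map_pow]
  set f := Ideal.Quotient.mk I F
  set j := Ideal.Quotient.mk I J
  set f' := Ideal.Quotient.mk I (expand _ p F)
  set j' := Ideal.Quotient.mk I (expand _ p J)
  calc j ^ e' = (f' * j') ^ e * j ^ e' := by rw [hF2, one_pow, one_mul]
    _ = j' ^ e * (f' ^ e * j ^ e') := by ring
    _ = j' ^ e * (f ^ (d + e') * j ^ e') := by rw [hd, hF3]
    _ = j' ^ e * f ^ d * (f * j) ^ e' := by ring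
    _ = _ := by rw [hF1, one_pow, mul_one]

theorem coeff_pow_mul_pow {F J : R[X]} {L a k : ℕ} (hJ : X ^ L ∣ F * J - 1) (ha : a < L)
    (hak : a ≤ k) : (F ^ k * J ^ (k - a)).coeff a = (F ^ a).coeff a := by
  have h : X ^ L ∣ (F * J) ^ (k - a) - 1 := by
    simpa using hJ.trans (sub_dvd_pow_sub_pow (F * J) 1 (k - a))
  obtain ⟨g, hg⟩ := h
  obtain ⟨b, rfl⟩ := Nat.exists_eq_add_of_le hak
  rw [Nat.add_sub_cancel_left] at *
  rw [show F ^ (a + b) * J ^ b = F ^ a + (F ^ a * g) * X ^ L by linear_combination F ^ a * hg,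
    coeff_add, coeff_mul_X_pow', if_neg ha.not_ge, add_zero]

end Truncation

section TracePolynomial

variable {R : Type*} [CommRing R]

theorem trace_degreeLT_restrict (D : ℕ) (u : R[X] →ₗ[R] R[X])
    (hu : ∀ f ∈ degreeLT R D, u f ∈ degreeLT R D) :
    LinearMap.trace R (degreeLT R D) (u.restrict hu) = ∑ j ∈ range D, (u (X ^ j)).coeff j := by
  rw [LinearMap.trace_eq_matrix_trace R (degreeLT.basis R D), Matrix.trace, Finset.sum_range]
  refine sum_congr rfl fun i _ => ?_
  rw [Matrix.diag_apply, LinearMap.toMatrix_apply, degreeLT.basis_repr, LinearMap.coe_restrict_apply,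
    degreeLT.basis_val]

end TracePolynomial

section Dwork

theorem twistedCartier_mem_poleLattice {p : ℕ} [Fact p.Prime] {h k : ℕ} (hp : p = 2 * h + 1)
    (hk : p ∣ 2 * k + 1) {F : ℤ_[p][X]} (hF : F.natDegree ≤ 2) :
    ∀ w ∈ poleLattice F k, twistedCartier p (F ^ (h * (2 * k + 1))) w ∈ poleLattice F k := by
  intro w hw
  obtain ⟨a, w', hw', h⟩ := twistedCartier_poleLattice hp hk hF hw
  rw [h]
  exact add_mem (Submodule.smul_mem _ _ (pow_mem_poleLattice F k)) (Submodule.smul_mem _ _ hw')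

theorem mem_degreeLT_of_smul_mem {R : Type*} [CommRing R] [IsDomain R] {e : R} (he : e ≠ 0) {n : ℕ}
    {f : R[X]} (hf : e • f ∈ degreeLT R n) : f ∈ degreeLT R n := by
  rw [mem_degreeLT, degree_lt_iff_coeff_zero] at *
  intro m hm
  have := hf m hm
  rw [coeff_smul, smul_eq_mul] at this
  exact (mul_eq_zero.1 this).resolve_left he

/-- The trace of a power of the twisted Cartier operator on `poleLattice F k`. -/
theorem trace_restrict_poleLattice {R : Type*} [CommRing R] [IsDomain R] [CharZero R]
    {F : R[X]} {k : ℕ} (hF : F.natDegree ≤ 2) [Module.Free R (poleLattice F k)]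
    [Module.Finite R (poleLattice F k)] (u : R[X] →ₗ[R] R[X])
    (hu : ∀ w ∈ poleLattice F k, u w ∈ poleLattice F k) :
    LinearMap.trace R (poleLattice F k) (u.restrict hu) =
      ∑ j ∈ range (3 * k + 1), (u (X ^ j)).coeff j := by
  have he : (k.descFactorial k : R) ≠ 0 := by
    rw [Nat.descFactorial_self]
    exact Nat.cast_ne_zero.2 k.factorial_ne_zero
  have hu' : ∀ f ∈ degreeLT R (3 * k + 1), u f ∈ degreeLT R (3 * k + 1) := by
    intro f hf
    refine mem_degreeLT_of_smul_mem he ?_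
    rw [← map_smul]
    exact poleLattice_le hF k (hu _ (descFactorial_smul_mem_poleLattice F hf))
  rw [← trace_degreeLT_restrict (3 * k + 1) u hu']
  refine trace_eq_of_intertwine (Submodule.inclusion (poleLattice_le hF k))
    (((k.descFactorial k : R) • (LinearMap.id : R[X] →ₗ[R] R[X])).restrict fun f hf =>
      descFactorial_smul_mem_poleLattice F hf) he ?_ ?_ _ _ ?_ <;>
  · ext1 x
    rfl

theorem dwork_congr_of_coeff {p : ℕ} [Fact p.Prime] {h n k : ℕ} (hp : p = 2 * h + 1)
    (hk : p ^ (n + 1) = 2 * k + 1) {F : ℤ_[p][X]} (hF : F.natDegree ≤ 2) (hF0 : F.coeff 0 = 1)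
    {β : ℤ_[p]} (hβ : IsUnit β)
    (htr : ∀ r, 1 ≤ r → r ≤ n + 2 → (p : ℤ_[p]) ^ r ∣
      (∑ j ∈ range (3 * k + 1), (∏ i ∈ range r, expand _ (p ^ i) (F ^ (h * p ^ (n + 1)))).coeff
        ((p ^ r - 1) * j + (p ^ r - 1) / 2)) - β ^ r) :
    (p : ℤ_[p]) ^ (n + 1) ∣ (F ^ ((p ^ (n + 1) - 1) / 2)).coeff ((p ^ (n + 1) - 1) / 2) -
      β * (F ^ ((p ^ n - 1) / 2)).coeff ((p ^ n - 1) / 2) := by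
  have hpp : p.Prime := Fact.out
  have hodd : Odd p := ⟨h, hp⟩
  have hpk : p ∣ 2 * k + 1 := hk ▸ dvd_pow_self p n.succ_ne_zero
  obtain ⟨J, hJ⟩ := exists_X_pow_dvd_mul_sub_one hF0 (p ^ (n + 1))
  have hfin : Module.Finite ℤ_[p] (poleLattice F k) := by
    have := Module.Finite.of_basis (degreeLT.basis ℤ_[p] (3 * k + 1))
    have := isNoetherian_of_isNoetherianRing_of_finite ℤ_[p] (degreeLT ℤ_[p] (3 * k + 1))
    have := isNoetherian_of_le (poleLattice_le hF k)
    infer_instance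
  have hfree : Module.Free ℤ_[p] (poleLattice F k) := Module.free_of_finite_type_torsion_free'
  have hU := twistedCartier_mem_poleLattice hp hpk hF
  set a : ℕ → ℕ := fun s => (p ^ s - 1) / 2 with ha
  have ha2 : ∀ s, 2 * a s + 1 = p ^ s := by
    intro s
    obtain ⟨b, hb⟩ := hodd.pow (n := s)
    simp only [ha]
    omega
  have hak : a (n + 1) = k := by have := ha2 (n + 1); omega
  have hale : ∀ s ≤ n + 1, a s ≤ k := by
    intro s hs
    have := ha2 s
    have := Nat.pow_le_pow_right hpp.pos hs
    omega
  set T : ℕ → poleLattice F k →ₗ[ℤ_[p]] ℤ_[p] := fun s =>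
    lcoeff ℤ_[p] (a s) ∘ₗ LinearMap.mulRight ℤ_[p] (J ^ (k - a s)) ∘ₗ
      (poleLattice F k).subtype with hTdef
  have hTa : ∀ s w, T s w = ((w : ℤ_[p][X]) * J ^ (k - a s)).coeff (a s) := fun _ _ => rfl
  set w₀ : poleLattice F k := ⟨F ^ k, pow_mem_poleLattice F k⟩ with hw₀
  have hTw : ∀ s ≤ n + 1, T s w₀ = (F ^ a s).coeff (a s) := by
    intro s hs
    rw [hTa]
    refine coeff_pow_mul_pow hJ ?_ (hale s hs)
    have := hale s hs
    omega
  have key := dwork_congr_of_trace (π := (p : ℤ_[p])) (Nat.cast_ne_zero.2 hpp.ne_zero)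
    PadicInt.p_nonunit ((twistedCartier p (F ^ (h * (2 * k + 1)))).restrict hU) w₀ T n ?_ ?_ ?_ hβ ?_
  · rwa [hTw _ le_rfl, hTw _ n.le_succ] at key
  · intro s hs w
    rw [hTa, hTa, LinearMap.coe_restrict_apply]
    have h1 := ha2 s
    have h2 := ha2 (s + 1)
    have h3 : p ^ (s + 1) = 2 * (h * p ^ s) + p ^ s := by rw [pow_succ, hp]; ring
    have h4 : p * a s + (p - 1) / 2 = a (s + 1) := by
      have h5 : p * p ^ s = 2 * (p * a s) + p := by rw [← h1]; ring
      have h6 : p * p ^ s = p ^ (s + 1) := by rw [pow_succ, mul_comm]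
      omega
    have h7 := hale (s + 1) (by omega)
    have h8 := hale s (by omega)
    refine natCast_pow_dvd_coeff_sub_coeff_twistedCartier hJ h4 (by omega) ?_ ?_ _
    · have h9 : (p - 1) / 2 = h := by omega
      rw [h9] at h4
      zify [h7, h8] at *
      rw [← h4]
      rw [hp]
      ring
    · refine (hodd.pow.coprime_two_right : Nat.Coprime (p ^ s) 2).dvd_of_dvd_mul_left ?_
      have : 2 * (k - a s) = p ^ (n + 1) - p ^ s := by omega
      rw [this]
      exact Nat.dvd_sub (pow_dvd_pow _ (by omega)) dvd_rfl
  · rw [hTw 0 (by omega)]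
    simp [ha]
  · intro w
    obtain ⟨b, w', hw', h⟩ := twistedCartier_poleLattice hp hpk hF w.2
    exact ⟨b, ⟨w', hw'⟩, Subtype.ext h⟩
  · intro r hr1 hr2
    rw [Module.End.pow_restrict, trace_restrict_poleLattice hF]
    convert htr r hr1 hr2 using 3 with j hj
    rw [twistedCartier_pow hodd, coeff_cartier (pow_pos hpp.pos r), coeff_mul_X_pow', hk,
      if_pos ((Nat.le_mul_of_pos_left j (pow_pos hpp.pos r)).trans le_self_add)]
    congr 1
    obtain ⟨q, hq⟩ : ∃ q, p ^ r = q + 1 := ⟨p ^ r - 1, (Nat.sub_add_cancel (pow_pos hpp.pos r)).symm⟩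
    rw [hq, Nat.add_sub_cancel, add_mul, one_mul]
    omega

end Dwork

section FiniteFieldLift

theorem pow_dvd_of_pow_dvd_map {p : ℕ} [Fact p.Prime] {W : Type*} [CommRing W] [IsDomain W]
    (hp : Prime (p : W)) (φ : ℤ_[p] →+* W) {n : ℕ} {x : ℤ_[p]} (h : (p : W) ^ n ∣ φ x) :
    (p : ℤ_[p]) ^ n ∣ x := by
  rcases eq_or_ne x 0 with rfl | hx
  · exact dvd_zero _
  · have h1 := PadicInt.unitCoeff_spec hx
    rw [h1, map_mul, map_pow, map_natCast,
      ((PadicInt.unitCoeff hx).isUnit.map φ).dvd_mul_left,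
      pow_dvd_pow_iff hp.ne_zero hp.not_isUnit] at h
    rw [h1]
    exact (pow_dvd_pow _ h).mul_left _

theorem ringHom_padicInt_eq {K : Type*} [Field K] {p : ℕ} [Fact p.Prime] [CharP K p]
    (f g : ℤ_[p] →+* K) : f = g := by
  have key : ∀ (f : ℤ_[p] →+* K) (x : ℤ_[p]), f x = (PadicInt.zmodRepr x : K) := by
    intro f x
    obtain ⟨y, hy⟩ := Ideal.mem_span_singleton.1
      (PadicInt.maximalIdeal_eq_span_p (p := p) ▸ PadicInt.sub_zmodRepr_mem x)
    have h := congrArg f hy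
    rwa [map_sub, map_mul, map_natCast, map_natCast, CharP.cast_eq_zero K p,
      zero_mul, sub_eq_zero] at h
  ext x
  rw [key, key]

variable {K : Type*} [Field K] [Fintype K] [DecidableEq K]

theorem sum_units_pow_lift {W : Type*} [CommRing W] [IsDomain W] {θ : K →* W}
    (hθ : Function.Injective θ) (i : ℕ) :
    ∑ x : Kˣ, θ x ^ i = if Fintype.card K - 1 ∣ i then ((Fintype.card K - 1 : ℕ) : W) else 0 := by
  classical
  have h := sum_hom_units ((powMonoidHom i).comp (θ.comp (Units.coeHom K)))
  have h1 : (powMonoidHom i).comp (θ.comp (Units.coeHom K)) = 1 ↔ Fintype.card K - 1 ∣ i := by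
    rw [← FiniteField.forall_pow_eq_one_iff, DFunLike.ext_iff]
    refine forall_congr' fun x => ?_
    simp only [MonoidHom.comp_apply, powMonoidHom_apply, Units.coeHom_apply, MonoidHom.one_apply,
      ← map_pow]
    rw [← map_one θ, hθ.eq_iff, ← Units.val_pow_eq_pow_val, Units.val_eq_one]
  simp only [h1, Fintype.card_units, Nat.cast_ite, Nat.cast_zero] at h
  exact h

theorem sum_units_pow_mul_eval₂_lift {R W : Type*} [CommRing R] [CommRing W] [IsDomain W]
    {θ : K →* W} (hθ : Function.Injective θ) (φ : R →+* W) (hK : Odd (Fintype.card K)) {H : R[X]}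
    {D : ℕ} (hH : H.natDegree < (Fintype.card K - 1) * D) :
    ∑ x : Kˣ, θ x ^ ((Fintype.card K - 1) / 2) * H.eval₂ φ (θ x) =
      φ ((Fintype.card K - 1 : ℕ) *
        ∑ j ∈ range D, H.coeff ((Fintype.card K - 1) * j + (Fintype.card K - 1) / 2)) := by
  obtain ⟨m, hm⟩ := hK
  have hm0 : 0 < m := by
    have := Fintype.one_lt_card (α := K)
    omega
  have hs := sum_units_pow_lift hθ
  rw [show Fintype.card K - 1 = m * 2 by omega] at *
  rw [Nat.mul_div_cancel _ two_pos]
  simp only [eval₂_eq_sum_range' φ hH, mul_sum]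
  rw [sum_comm, mul_comm (m * 2) D, Finset.sum_range, ← finProdFinEquiv.sum_comp,
    Fintype.sum_prod_type, map_sum, Finset.sum_range]
  refine sum_congr rfl fun j _ => ?_
  have h1 : ∀ l : Fin (m * 2), ∑ x : Kˣ, θ x ^ m * (φ (H.coeff (finProdFinEquiv (j, l))) *
      θ x ^ (finProdFinEquiv (j, l) : ℕ)) = if l = ⟨m, by omega⟩ then
        φ ((m * 2 : ℕ) * H.coeff (m * 2 * j + m)) else 0 := by
    intro l
    have h2 : ∀ x : Kˣ, θ x ^ m * (φ (H.coeff (finProdFinEquiv (j, l))) *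
        θ x ^ (finProdFinEquiv (j, l) : ℕ)) = φ (H.coeff (l + m * 2 * j)) *
        θ x ^ ((l + m) + m * 2 * j) := by
      intro x
      simp only [finProdFinEquiv_apply_val]
      ring
    have h3 : m * 2 ∣ (l + m) + m * 2 * j ↔ l = ⟨m, by omega⟩ := by
      rw [← Nat.dvd_add_iff_left (Dvd.intro _ rfl), Fin.ext_iff]
      have := l.2
      constructor
      · rintro ⟨c, hc⟩
        rcases c with _ | _ | c
        · omega
        · simp only at *
          omega
        · exfalso
          have : m * 2 * (c + 1 + 1) = m * 2 * c + m * 4 := by ring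
          omega
      · intro h
        simp only at h
        exact ⟨1, by omega⟩
    simp only [h2, ← mul_sum, hs, h3]
    split_ifs with h
    · subst h
      rw [map_mul, map_natCast, mul_comm, add_comm]
    · rw [mul_zero]
  simp only [h1, sum_ite_eq', mem_univ, if_true]

theorem sum_units_quadraticChar_mul (f : K → K) :
    ∑ x : Kˣ, quadraticChar K (x * f x) = ∑ x : K, quadraticChar K (x * f x) := by
  classical
  rw [← Fintype.sum_subtype_add_sum_subtype (fun x : K => x ≠ 0)
    (fun x => quadraticChar K (x * f x))]
  have : ∑ x : {x : K // ¬ x ≠ 0}, quadraticChar K (x * f x) = 0 :=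
    sum_eq_zero fun x _ => by rw [not_not.1 x.2, zero_mul, quadraticChar_zero]
  rw [this, add_zero]
  exact (unitsEquivNeZero (G₀ := K)).sum_comp
    (fun x : {x : K // x ≠ 0} => quadraticChar K ((x : K) * f x))

theorem pow_dvd_sum_units_sub_quadraticChar {p : ℕ} [Fact p.Prime] [CharP K p] (hp : p ≠ 2) {r : ℕ}
    (hK : Fintype.card K = p ^ r) {R W : Type*} [CommRing R] [CommRing W] {θ : K →* W}
    (φ : R →+* W) (π : W →+* K) (hπθ : ∀ x, π (θ x) = x) (hπ : ∀ w, π w = 0 → (p : W) ∣ w)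
    (hφ : ∀ a, π (φ a) ^ p = π (φ a)) (F : R[X]) (M : ℕ) :
    (p : W) ^ (M + 1) ∣ ∑ x : Kˣ, θ x ^ ((p ^ r - 1) / 2) *
      (∏ i ∈ range r, expand _ (p ^ i) (F ^ ((p - 1) / 2 * p ^ M))).eval₂ φ (θ x) -
      ((∑ x : K, quadraticChar K (x * F.eval₂ (π.comp φ) x) : ℤ) : W) := by
  have hodd : Odd p := (Fact.out : p.Prime).odd_of_ne_two hp
  have hchar : ringChar K ≠ 2 := by rwa [ringChar.eq K p]
  rw [← sum_units_quadraticChar_mul, Int.cast_sum, ← sum_sub_distrib]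
  refine dvd_sum fun x _ => ?_
  set y : W := θ x ^ ((p ^ r - 1) / 2) * ∏ i ∈ range r, F.eval₂ φ (θ x ^ p ^ i) ^ ((p - 1) / 2) with hy
  set c : ℤ := quadraticChar K (x * F.eval₂ (π.comp φ) x) with hc
  have hc' : c ^ p ^ M = c := by
    rcases quadraticChar_isQuadratic K (x * F.eval₂ (π.comp φ) x) with h | h | h
    · rw [hc, h, zero_pow (pow_ne_zero _ hodd.pos.ne')]
    · rw [hc, h, one_pow]
    · rw [hc, h, hodd.pow.neg_one_pow]
  have hθ : θ x ^ ((p ^ r - 1) / 2) = (θ x ^ ((p ^ r - 1) / 2)) ^ p ^ M := by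
    obtain ⟨k, hk⟩ := hodd.pow (n := M)
    have h1 : (p ^ r - 1) / 2 * 2 = p ^ r - 1 := by
      obtain ⟨m, hm⟩ := hodd.pow (n := r)
      omega
    rw [hk, pow_succ, pow_mul, ← pow_mul (θ x), h1, ← map_pow θ x.1 (p ^ r - 1), ← hK,
      FiniteField.pow_card_sub_one_eq_one x.1 x.ne_zero, map_one, one_pow, one_mul]
  have h1 : θ x ^ ((p ^ r - 1) / 2) *
      (∏ i ∈ range r, expand _ (p ^ i) (F ^ ((p - 1) / 2 * p ^ M))).eval₂ φ (θ x) = y ^ p ^ M := by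
    rw [hy, mul_pow, ← hθ, eval₂_finsetProd, ← prod_pow]
    congr 1
    refine prod_congr rfl fun i _ => ?_
    rw [expand_eq_comp_X_pow, eval₂_comp, eval₂_X_pow, eval₂_pow, pow_mul]
  have h2 : π y = π (c : W) := by
    have h3 : ∀ i, π (F.eval₂ φ (θ x ^ p ^ i)) = (F.eval₂ (π.comp φ) (x : K)) ^ p ^ i := by
      intro i
      rw [hom_eval₂, map_pow, hπθ, ← iterateFrobenius_def, ← iterateFrobenius_def, hom_eval₂]
      congr 1
      ext a
      induction i with
      | zero => simp
      | succ i ih =>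
        simp only [RingHom.comp_apply, iterateFrobenius_def] at ih ⊢
        rw [pow_succ', pow_mul, hφ, ← ih]
    have h4 : ∑ i ∈ range r, p ^ i * ((p - 1) / 2) = (p ^ r - 1) / 2 := by
      have h5 := geom_sum_mul_of_one_le (x := p) hodd.pos r
      obtain ⟨m, hm⟩ := hodd
      rw [← sum_mul]
      rw [show p - 1 = (p - 1) / 2 * 2 by omega, ← mul_assoc] at h5
      omega
    rw [hy, map_mul, map_prod, map_pow, hπθ, map_intCast, hc,
      quadraticChar_eq_pow_of_char_ne_two' hchar, mul_pow, hK]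
    simp only [map_pow, h3, ← pow_mul]
    rw [prod_pow_eq_pow_sum, h4]
    obtain ⟨m, hm⟩ := hodd.pow (n := r)
    rw [show (p ^ r - 1) / 2 = p ^ r / 2 by omega]
  rw [h1, ← hc', Int.cast_pow]
  exact dvd_sub_pow_of_dvd_sub (hπ _ (by rw [map_sub, h2, sub_self])) M

/-- The trace formula: modulo a power of `p`, the coefficients of a product of expansions of a power
of `F` compute a quadratic character sum. -/
theorem pow_dvd_sum_coeff_sub_quadraticChar {p : ℕ} [Fact p.Prime] [CharP K p] (hp : p ≠ 2) {r : ℕ}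
    (hK : Fintype.card K = p ^ r) (f : ℤ_[p] →+* K) (F : ℤ_[p][X]) (M : ℕ) {D : ℕ}
    (hD : (∏ i ∈ range r, expand _ (p ^ i) (F ^ ((p - 1) / 2 * p ^ M))).natDegree <
      (p ^ r - 1) * D) :
    (p : ℤ_[p]) ^ (M + 1) ∣ (p ^ r - 1 : ℕ) * ∑ j ∈ range D,
      (∏ i ∈ range r, expand _ (p ^ i) (F ^ ((p - 1) / 2 * p ^ M))).coeff
        ((p ^ r - 1) * j + (p ^ r - 1) / 2) -
      ((∑ x : K, quadraticChar K (x * F.eval₂ f x) : ℤ) : ℤ_[p]) := by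
  have hodd : Odd p := (Fact.out : p.Prime).odd_of_ne_two hp
  have : Fintype (ZMod p) := ZMod.fintype p
  let φ : ℤ_[p] →+* WittVector p K :=
    (WittVector.map (ZMod.castHom dvd_rfl K)).comp (WittVector.fromPadicInt p)
  let π : WittVector p K →+* K := WittVector.constantCoeff
  have hf : π.comp φ = f := ringHom_padicInt_eq _ _
  have hinj : Function.Injective (WittVector.teichmuller p : K →* WittVector p K) := by
    intro x y h
    rw [← WittVector.teichmuller_coeff_zero p x, h, WittVector.teichmuller_coeff_zero]
  refine pow_dvd_of_pow_dvd_map (WittVector.irreducible p (k := K)).prime φ ?_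
  rw [map_sub, map_intCast, ← hK, ← sum_units_pow_mul_eval₂_lift hinj φ (hK ▸ hodd.pow) (hK ▸ hD),
    ← hf, hK]
  refine pow_dvd_sum_units_sub_quadraticChar hp hK φ π (WittVector.teichmuller_coeff_zero p) ?_ ?_ F M
  · intro w hw
    exact Ideal.mem_span_singleton.1 ((WittVector.mem_span_p_iff_coeff_zero_eq_zero w).2 hw)
  · intro a
    have h : π (φ a) = ZMod.castHom dvd_rfl K (PadicInt.toZMod a) :=
      RingHom.congr_fun (ringHom_padicInt_eq (π.comp φ)
        ((ZMod.castHom dvd_rfl K).comp PadicInt.toZMod)) a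
    rw [h, ← map_pow, ZMod.pow_card]

end FiniteFieldLift

section EulerProduct

variable (k : Type*) [Field k] [Finite k]

theorem finite_setOf_monic_natDegree_eq (d : ℕ) : {g : k[X] | g.Monic ∧ g.natDegree = d}.Finite :=
  have := Finite.of_equiv _ (degreeLTEquiv k d).toEquiv.symm
  Finite.of_equiv _ (monicEquivDegreeLT d).symm

/-- The monic polynomials of degree `d` over a finite field. -/
noncomputable def monicFinset (d : ℕ) : Finset k[X] := (finite_setOf_monic_natDegree_eq k d).toFinset

open Classical in
/-- The monic irreducible polynomials of degree `d` over a finite field. -/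
noncomputable def irreducibleFinset (d : ℕ) : Finset k[X] := {g ∈ monicFinset k d | Irreducible g}

variable {k}

theorem mem_monicFinset {d : ℕ} {g : k[X]} : g ∈ monicFinset k d ↔ g.Monic ∧ g.natDegree = d := by
  simp [monicFinset]

theorem mem_irreducibleFinset {d : ℕ} {g : k[X]} :
    g ∈ irreducibleFinset k d ↔ (g.Monic ∧ g.natDegree = d) ∧ Irreducible g := by
  simp [irreducibleFinset, mem_monicFinset]

/-- The sum of a multiplicative function over the monic polynomials of degree `d`. -/
noncomputable def monicSum (c : k[X] →* ℤ) (d : ℕ) : ℤ := ∑ g ∈ monicFinset k d, c g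

/-- The sum of `deg P * c P ^ e` over the powers `P ^ e` of degree `m` of monic irreducible
polynomials. -/
noncomputable def primePowerSum (c : k[X] →* ℤ) (m : ℕ) : ℤ :=
  ∑ j ∈ m.divisors, ∑ P ∈ irreducibleFinset k j, (j : ℤ) * c P ^ (m / j)

open Classical in
theorem sum_irreducibleFinset_of_monic {d : ℕ} {g : k[X]} (hg : g ∈ monicFinset k d) :
    (d : ℤ) = ∑ j ∈ Icc 1 d, ∑ P ∈ irreducibleFinset k j, ∑ e ∈ Icc 1 d,
      if P ^ e ∣ g then (j : ℤ) else 0 := by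
  obtain ⟨hmon, hdeg⟩ := mem_monicFinset.1 hg
  have hg0 := hmon.ne_zero
  set s := UniqueFactorizationMonoid.normalizedFactors g with hs
  have hmem : ∀ P ∈ s, Irreducible P ∧ P.Monic ∧ P ∣ g := fun P hP =>
    (Polynomial.mem_normalizedFactors_iff hg0).1 hP
  have h1 : g.natDegree = (s.map natDegree).sum := by
    rw [← natDegree_multiset_prod_of_monic s fun P hP => (hmem P hP).2.1,
      UniqueFactorizationMonoid.prod_normalizedFactors_eq hg0, hmon.normalize_eq_self]
  have hcount : ∀ j, ∀ P ∈ irreducibleFinset k j, 1 ≤ j →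
      ∑ e ∈ Icc 1 d, (if P ^ e ∣ g then (j : ℤ) else 0) = s.count P * j := by
    intro j P hP hj
    obtain ⟨⟨hPm, hPd⟩, hPi⟩ := mem_irreducibleFinset.1 hP
    have h2 : ∀ e, P ^ e ∣ g ↔ e ≤ s.count P := by
      intro e
      rw [pow_dvd_iff_le_emultiplicity,
        UniqueFactorizationMonoid.emultiplicity_eq_count_normalizedFactors hPi hg0,
        hPm.normalize_eq_self, Nat.cast_le]
    have h3 : s.count P ≤ d := by
      have := natDegree_le_of_dvd ((h2 _).2 le_rfl) hg0
      rw [natDegree_pow, hPd, hdeg] at this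
      exact (Nat.le_mul_of_pos_right _ hj).trans this
    simp only [h2]
    rw [← sum_filter, sum_const, nsmul_eq_mul]
    congr 2
    have : (Icc 1 d).filter (fun e => e ≤ s.count P) = Icc 1 (s.count P) := by
      ext e
      simp only [mem_filter, mem_Icc]
      omega
    rw [this, Nat.card_Icc, Nat.add_sub_cancel]
  rw [sum_congr rfl fun j hj => sum_congr rfl fun P hP => hcount j P hP (mem_Icc.1 hj).1,
    show (d : ℤ) = ((s.map natDegree).sum : ℕ) by rw [← h1, hdeg], sum_multiset_map_count,
    ← sum_fiberwise_of_maps_to (t := Icc 1 d) (g := natDegree), Nat.cast_sum]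
  · refine sum_congr rfl fun j _ => ?_
    rw [Nat.cast_sum]
    refine (sum_subset ?_ ?_).trans (sum_congr rfl fun P hP => ?_)
    · intro P hP
      obtain ⟨hP1, hP2⟩ := mem_filter.1 hP
      obtain ⟨h2, h3, h4⟩ := hmem P (Multiset.mem_toFinset.1 hP1)
      exact mem_irreducibleFinset.2 ⟨⟨h3, hP2⟩, h2⟩
    · intro P hP hP'
      have : P ∉ s := fun h => hP' (mem_filter.2 ⟨Multiset.mem_toFinset.2 h,
        (mem_irreducibleFinset.1 hP).1.2⟩)
      rw [Multiset.count_eq_zero_of_notMem this, zero_smul, Nat.cast_zero]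
    · rw [nsmul_eq_mul, Nat.cast_mul, Nat.cast_id, (mem_irreducibleFinset.1 hP).1.2]
  · intro P hP
    obtain ⟨h2, h3, h4⟩ := hmem P (Multiset.mem_toFinset.1 hP)
    exact mem_Icc.2 ⟨h2.natDegree_pos, hdeg ▸ natDegree_le_of_dvd h4 hg0⟩

open Classical in
theorem sum_monicFinset_pow_dvd (c : k[X] →* ℤ) (d e j : ℕ) {P : k[X]}
    (hP : P ∈ irreducibleFinset k j) :
    ∑ g ∈ monicFinset k d, (if P ^ e ∣ g then c g else 0) =
      if e * j ≤ d then c P ^ e * monicSum c (d - e * j) else 0 := by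
  obtain ⟨⟨hPm, hPd⟩, hPi⟩ := mem_irreducibleFinset.1 hP
  have hdeg : (P ^ e).natDegree = e * j := by rw [natDegree_pow, hPd]
  rw [← sum_filter]
  split_ifs with h
  · rw [monicSum, mul_sum]
    symm
    refine sum_bij (fun g _ => P ^ e * g) ?_ ?_ ?_ ?_
    · intro g hg
      obtain ⟨h1, h2⟩ := mem_monicFinset.1 hg
      refine mem_filter.2 ⟨mem_monicFinset.2 ⟨(hPm.pow e).mul h1, ?_⟩, Dvd.intro _ rfl⟩
      rw [(hPm.pow e).natDegree_mul h1, hdeg, h2]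
      omega
    · intro g _ g' _ hgg'
      exact mul_left_cancel₀ (hPm.pow e).ne_zero hgg'
    · intro g hg
      obtain ⟨h1, g', rfl⟩ := mem_filter.1 hg
      obtain ⟨h2, h3⟩ := mem_monicFinset.1 h1
      have h4 := (hPm.pow e).of_mul_monic_left h2
      refine ⟨g', mem_monicFinset.2 ⟨h4, ?_⟩, rfl⟩
      rw [(hPm.pow e).natDegree_mul h4, hdeg] at h3
      omega
    · intro g _
      rw [map_mul, map_pow]
  · refine sum_eq_zero fun g hg => absurd ?_ h
    obtain ⟨h1, h2⟩ := mem_filter.1 hg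
    obtain ⟨h3, h4⟩ := mem_monicFinset.1 h1
    rw [← hdeg, ← h4]
    exact natDegree_le_of_dvd h2 h3.ne_zero

theorem sum_Icc_mul_le {j : ℕ} (hj : 1 ≤ j) (d : ℕ) (f : ℕ → ℕ → ℤ) :
    ∑ e ∈ Icc 1 d, (if e * j ≤ d then f e (e * j) else 0) =
      ∑ m ∈ Icc 1 d, if j ∣ m then f (m / j) m else 0 := by
  rw [← sum_filter, ← sum_filter]
  refine sum_nbij' (fun e => e * j) (fun m => m / j) ?_ ?_ ?_ ?_ ?_
  · intro e he
    simp only [mem_filter, mem_Icc] at he ⊢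
    exact ⟨⟨Nat.mul_pos he.1.1 hj, he.2⟩, Dvd.intro_left _ rfl⟩
  · intro m hm
    simp only [mem_filter, mem_Icc] at hm ⊢
    rw [Nat.div_mul_cancel hm.2]
    exact ⟨⟨Nat.div_pos (Nat.le_of_dvd hm.1.1 hm.2) hj, (Nat.div_le_self _ _).trans hm.1.2⟩,
      hm.1.2⟩
  · intro e _
    exact Nat.mul_div_cancel _ hj
  · intro m hm
    exact Nat.div_mul_cancel (mem_filter.1 hm).2
  · intro e _
    rw [Nat.mul_div_cancel _ hj]

/-- The logarithmic derivative of the Euler product of the `L`-function attached to `c`. -/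
theorem natCast_mul_monicSum (c : k[X] →* ℤ) (d : ℕ) :
    (d : ℤ) * monicSum c d = ∑ m ∈ Icc 1 d, primePowerSum c m * monicSum c (d - m) := by
  classical
  calc (d : ℤ) * monicSum c d = ∑ g ∈ monicFinset k d, ∑ j ∈ Icc 1 d, ∑ P ∈ irreducibleFinset k j,
        ∑ e ∈ Icc 1 d, (j : ℤ) * if P ^ e ∣ g then c g else 0 := by
        rw [monicSum, mul_sum]
        refine sum_congr rfl fun g hg => ?_
        nth_rewrite 1 [sum_irreducibleFinset_of_monic hg]
        simp only [sum_mul]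
        refine sum_congr rfl fun j _ => sum_congr rfl fun P _ => sum_congr rfl fun e _ => ?_
        split_ifs <;> simp
    _ = ∑ j ∈ Icc 1 d, ∑ P ∈ irreducibleFinset k j, ∑ e ∈ Icc 1 d,
        if e * j ≤ d then (j : ℤ) * c P ^ e * monicSum c (d - e * j) else 0 := by
        rw [sum_comm]
        refine sum_congr rfl fun j _ => ?_
        rw [sum_comm]
        refine sum_congr rfl fun P hP => ?_
        rw [sum_comm]
        refine sum_congr rfl fun e _ => ?_
        rw [← mul_sum, sum_monicFinset_pow_dvd c d e j hP]
        split_ifs <;> simp [mul_assoc]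
    _ = ∑ j ∈ Icc 1 d, ∑ m ∈ Icc 1 d, if j ∣ m then
        (∑ P ∈ irreducibleFinset k j, (j : ℤ) * c P ^ (m / j)) * monicSum c (d - m) else 0 := by
        refine sum_congr rfl fun j hj => ?_
        rw [sum_congr rfl fun P _ => sum_Icc_mul_le (mem_Icc.1 hj).1 d
          fun e m => (j : ℤ) * c P ^ e * monicSum c (d - m), sum_comm]
        refine sum_congr rfl fun m _ => ?_
        split_ifs
        · rw [sum_mul]
        · exact sum_const_zero
    _ = _ := by
        rw [sum_comm]
        refine sum_congr rfl fun m hm => ?_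
        obtain ⟨hm1, hm2⟩ := mem_Icc.1 hm
        rw [← sum_filter, primePowerSum, sum_mul]
        refine sum_congr ?_ fun _ _ => rfl
        ext j
        simp only [mem_filter, mem_Icc, Nat.mem_divisors]
        constructor
        · rintro ⟨-, h⟩
          exact ⟨h, by omega⟩
        · rintro ⟨h, -⟩
          exact ⟨⟨Nat.pos_of_dvd_of_pos h hm1, (Nat.le_of_dvd hm1 h).trans hm2⟩, h⟩

end EulerProduct

section MinpolySum

variable {k K : Type*} [Field k] [Field K] [Algebra k K]

theorem norm_algebraMap_sub_eq_eval_minpoly_pow [FiniteDimensional k K] (y : K) (t : k) :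
    Algebra.norm k (algebraMap k K t - y) =
      ((minpoly k y).eval t) ^ (Module.finrank k K / (minpoly k y).natDegree) := by
  have hy := Algebra.IsIntegral.isIntegral (R := k) y
  let L := IntermediateField.adjoin k {y}
  set pb := IntermediateField.adjoin.powerBasis hy with hpb
  have hgen : algebraMap L K pb.gen = y := by
    rw [hpb, IntermediateField.adjoin.powerBasis_gen]
    exact IntermediateField.AdjoinSimple.algebraMap_gen k y
  have hmin : minpoly k pb.gen = minpoly k y := by
    have := minpoly.algebraMap_eq (A := k) (algebraMap L K).injective pb.gen
    rw [hgen] at this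
    exact this.symm
  have h1 : Algebra.norm k (algebraMap k L t - pb.gen) = (minpoly k y).eval t := by
    rw [Algebra.norm_eq_matrix_det pb.basis, map_sub, AlgHom.commutes, ← hmin,
      ← charpoly_leftMulMatrix, Matrix.eval_charpoly]
    congr 1
  have h2 : algebraMap k K t - y = algebraMap L K (algebraMap k L t - pb.gen) := by
    rw [map_sub, hgen, ← IsScalarTower.algebraMap_apply]
  have h3 : Module.finrank k L = (minpoly k y).natDegree := IntermediateField.adjoin.finrank hy
  rw [h2, ← Algebra.norm_norm (S := L), Algebra.norm_algebraMap, map_pow, h1,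
    ← Module.finrank_mul_finrank k L K, h3, Nat.mul_div_cancel_left _ (minpoly.natDegree_pos hy)]

variable [Fintype k] [Fintype K]

open Classical in
theorem sum_minpoly (f : k[X] → ℤ) :
    ∑ y : K, f (minpoly k y) = ∑ j ∈ (Module.finrank k K).divisors,
      ∑ P ∈ irreducibleFinset k j, (j : ℤ) * f P := by
  have hfin : Module.finrank k K ≠ 0 := Module.finrank_pos.ne'
  have hy : ∀ y : K, IsIntegral k y := fun y => Algebra.IsIntegral.isIntegral y
  rw [← sum_fiberwise_of_maps_to (t := (Module.finrank k K).divisors)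
    (g := fun y => (minpoly k y).natDegree)
    fun y _ => Nat.mem_divisors.2 ⟨minpoly.degree_dvd (hy y), hfin⟩]
  refine sum_congr rfl fun j hj => ?_
  rw [← sum_fiberwise_of_maps_to (t := irreducibleFinset k j) (g := fun y => minpoly k y)
    fun y h => mem_irreducibleFinset.2
      ⟨⟨minpoly.monic (hy y), (mem_filter.1 h).2⟩, minpoly.irreducible (hy y)⟩]
  refine sum_congr rfl fun P hP => ?_
  obtain ⟨⟨hPm, hPd⟩, hPi⟩ := mem_irreducibleFinset.1 hP
  have hsplit : (P.map (algebraMap k K)).Splits := by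
    have h1 : P ∣ X ^ Nat.card K - X := by
      rw [Module.natCard_eq_pow_finrank (K := k) (V := K),
        ← hPi.natDegree_dvd_iff_dvd_X_pow_card_pow_sub_X, hPd]
      exact Nat.dvd_of_mem_divisors hj
    have h2 := Polynomial.map_dvd (algebraMap k K) h1
    simp only [Polynomial.map_sub, Polynomial.map_pow, map_X] at h2
    refine Polynomial.splits_X_pow_nat_card_sub_X.of_dvd ?_ h2
    rw [Nat.card_eq_fintype_card]
    exact FiniteField.X_pow_card_sub_X_ne_zero K Fintype.one_lt_card
  have hcard := card_rootSet_eq_natDegree (PerfectField.separable_of_irreducible hPi) hsplit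
  rw [sum_congr rfl fun y h => congrArg f (mem_filter.1 h).2, sum_const, nsmul_eq_mul]
  congr 2
  refine .trans ?_ ((Set.toFinset_card _).trans (hcard.trans hPd))
  congr 1
  ext y
  simp only [mem_filter, mem_univ, true_and, Set.mem_toFinset, mem_rootSet]
  constructor
  · rintro ⟨-, rfl⟩
    exact ⟨hPm.ne_zero, minpoly.aeval k y⟩
  · rintro ⟨-, h⟩
    have := minpoly.eq_of_irreducible_of_monic hPi h hPm
    exact ⟨(congrArg natDegree this).symm.trans hPd, this.symm⟩

theorem quadraticChar_eq_quadraticChar_norm [DecidableEq k] [DecidableEq K]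
    (hk : ringChar k ≠ 2) (z : K) : quadraticChar K z = quadraticChar k (Algebra.norm k z) := by
  have hK : ringChar K ≠ 2 := by rwa [← Algebra.ringChar_eq k K]
  obtain ⟨m, hm⟩ : Odd (Fintype.card k) := Nat.odd_iff.2 (FiniteField.odd_card_of_char_ne_two hk)
  obtain ⟨M, hM⟩ : Odd (Fintype.card K) := Nat.odd_iff.2 (FiniteField.odd_card_of_char_ne_two hK)
  have hdvd : Fintype.card k - 1 ∣ Fintype.card K - 1 := by
    rw [Module.card_eq_pow_finrank (K := k) (V := K)]
    exact Nat.sub_one_dvd_pow_sub_one _ _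
  have h : ((quadraticChar K z : ℤ) : K) = ((quadraticChar k (Algebra.norm k z) : ℤ) : K) := by
    rw [← map_intCast (algebraMap k K) (quadraticChar k (Algebra.norm k z)),
      quadraticChar_eq_pow_of_char_ne_two' hK, quadraticChar_eq_pow_of_char_ne_two' hk, map_pow,
      FiniteField.algebraMap_norm_eq_pow, ← pow_mul, Nat.card_eq_fintype_card,
      Nat.card_eq_fintype_card]
    congr 1
    obtain ⟨c, hc⟩ := hdvd
    have hm0 : 0 < m := by
      have := Fintype.one_lt_card (α := k)
      omega
    rw [hc, hm, Nat.add_sub_cancel, Nat.mul_div_cancel_left _ (by omega)]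
    rw [hm, hM, Nat.add_sub_cancel, Nat.add_sub_cancel, mul_assoc] at hc
    have := mul_left_cancel₀ two_ne_zero hc
    rw [show (2 * m + 1) / 2 = m by omega, hM, this]
    rw [mul_comm c m]
    omega
  have hK2 : (2 : K) ≠ 0 := Ring.two_ne_zero hK
  have h1 : (1 : K) ≠ -1 := fun h => hK2 (by linear_combination h)
  rcases quadraticChar_isQuadratic K z with h2 | h2 | h2 <;>
  rcases quadraticChar_isQuadratic k (Algebra.norm k z) with h3 | h3 | h3 <;>
  rw [h2, h3] at h ⊢ <;> simp_all [eq_comm]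

end MinpolySum

section LegendreLFunction

theorem monicSum_zero {k : Type*} [Field k] [Finite k] (c : k[X] →* ℤ) : monicSum c 0 = 1 := by
  have : monicFinset k 0 = {1} := by
    ext g
    rw [mem_monicFinset, mem_singleton]
    constructor
    · rintro ⟨h1, h2⟩
      exact h1.natDegree_eq_zero.1 h2
    · rintro rfl
      exact ⟨monic_one, natDegree_one⟩
  rw [monicSum, this, sum_singleton, map_one]

variable {k : Type*} [Field k] [Fintype k] [DecidableEq k]

/-- The multiplicative function `g ↦ χ (g 0 * g 1 * g a)` with `χ` the quadratic character. -/
noncomputable def evalQuadraticChar (a : k) : k[X] →* ℤ :=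
  (quadraticChar k).toMonoidHom.comp
    ((evalRingHom 0 : k[X] →+* k) * (evalRingHom 1 : k[X] →+* k) * (evalRingHom a : k[X] →+* k) :
      k[X] →* k)

theorem evalQuadraticChar_apply (a : k) (g : k[X]) :
    evalQuadraticChar a g = quadraticChar k (g.eval 0 * g.eval 1 * g.eval a) :=
  rfl

theorem primePowerSum_evalQuadraticChar (hk : ringChar k ≠ 2) (a : k) (K : Type*) [Field K]
    [Fintype K] [DecidableEq K] [Algebra k K] :
    primePowerSum (evalQuadraticChar a) (Module.finrank k K) =
      ∑ y : K, quadraticChar K ((0 - y) * (1 - y) * (algebraMap k K a - y)) := by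
  have h := sum_minpoly (k := k) (K := K) fun P =>
    evalQuadraticChar a P ^ (Module.finrank k K / P.natDegree)
  rw [primePowerSum]
  refine .trans (sum_congr rfl fun j _ => sum_congr rfl fun P hP => ?_)
    (h.symm.trans (sum_congr rfl fun y _ => ?_))
  · rw [(mem_irreducibleFinset.1 hP).1.2]
  · rw [quadraticChar_eq_quadraticChar_norm hk, evalQuadraticChar_apply, ← map_pow, mul_pow,
      mul_pow, ← norm_algebraMap_sub_eq_eval_minpoly_pow, ← norm_algebraMap_sub_eq_eval_minpoly_pow,
      ← norm_algebraMap_sub_eq_eval_minpoly_pow, ← map_mul, ← map_mul, map_zero, map_one]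

theorem sum_quadraticChar_add_mul_add (hk : ringChar k ≠ 2) (u w : k) :
    ∑ b : k, quadraticChar k ((b + u) * (b + w)) =
      if u = w then (Fintype.card k : ℤ) - 1 else -1 := by
  split_ifs with h
  · subst h
    rw [← (Equiv.subRight u).sum_comp]
    simp only [Equiv.subRight_apply, sub_add_cancel]
    rw [← sum_erase_add _ _ (mem_univ (0 : k)), mul_zero, MulChar.map_zero, add_zero,
      sum_congr rfl fun b hb => (congrArg _ (sq b).symm).trans
        (quadraticChar_sq_one' (ne_of_mem_erase hb))]
    rw [sum_const, card_erase_of_mem (mem_univ _), card_univ, nsmul_eq_mul, mul_one,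
      Nat.cast_pred Fintype.card_pos]
  · have huw : u - w ≠ 0 := sub_ne_zero.2 h
    rw [← ((Equiv.mulLeft₀ (u - w) huw).trans (Equiv.subRight u)).sum_comp]
    have h1 : ∀ x : k, quadraticChar k
        ((((Equiv.mulLeft₀ (u - w) huw).trans (Equiv.subRight u)) x + u) *
          (((Equiv.mulLeft₀ (u - w) huw).trans (Equiv.subRight u)) x + w)) =
        quadraticChar k (-1) * (quadraticChar k x * quadraticChar k (1 - x)) := by
      intro x
      rw [Equiv.trans_apply, Equiv.subRight_apply, Equiv.mulLeft₀_apply,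
        show ((u - w) * x - u + u) * ((u - w) * x - u + w) =
          (u - w) ^ 2 * (-1 * (x * (1 - x))) by ring, map_mul, quadraticChar_sq_one' huw, one_mul,
        map_mul, map_mul]
    have h2 := jacobiSum_nontrivial_inv (quadraticChar_ne_one hk)
    rw [(quadraticChar_isQuadratic k).inv, jacobiSum] at h2
    rw [sum_congr rfl fun x _ => h1 x, ← mul_sum, h2, mul_neg, ← sq,
      quadraticChar_sq_one (neg_ne_zero.2 one_ne_zero)]

theorem monicSum_two_evalQuadraticChar (hk : ringChar k ≠ 2) {a : k} (h0 : a ≠ 0) (h1 : a ≠ 1) :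
    monicSum (evalQuadraticChar a) 2 = Fintype.card k := by
  have h2 : monicSum (evalQuadraticChar a) 2 = ∑ v : k × k,
      evalQuadraticChar a (X ^ 2 + C v.2 * X + C v.1) := by
    rw [monicSum]
    symm
    refine sum_bij (fun v _ => X ^ 2 + C v.2 * X + C v.1) ?_ ?_ ?_ fun _ _ => rfl
    · intro v _
      refine mem_monicFinset.2 ⟨by monicity!, by compute_degree!⟩
    · intro v _ w _ hvw
      have e0 := congrArg (fun g => coeff g 0) hvw
      have e1 := congrArg (fun g => coeff g 1) hvw
      simp [coeff_X, coeff_C] at e0 e1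
      exact Prod.ext e0 e1
    · intro g hg
      obtain ⟨hm, hd⟩ := mem_monicFinset.1 hg
      refine ⟨(g.coeff 0, g.coeff 1), mem_univ _, ?_⟩
      have h2 : g.coeff 2 = 1 := hd ▸ hm
      conv_rhs => rw [g.as_sum_range_C_mul_X_pow' (n := 3) (by omega)]
      simp only [sum_range_succ, sum_range_zero, h2, map_one]
      ring
  have h3 : ∀ s t : k, evalQuadraticChar a (X ^ 2 + C t * X + C s) =
      quadraticChar k a * (quadraticChar k s * quadraticChar k
        ((t + (1 + s)) * (t + (a + s / a)))) := by
    intro s t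
    rw [evalQuadraticChar_apply, ← map_mul, ← map_mul]
    congr 1
    simp
    field_simp
    ring
  have h4 : ∀ s : k, 1 + s = a + s / a ↔ s = a := by
    intro s
    constructor
    · intro h
      field_simp at h
      have : (a - 1) * (s - a) = 0 := by linear_combination h
      exact sub_eq_zero.1 ((mul_eq_zero.1 this).resolve_left (sub_ne_zero.2 h1))
    · rintro rfl
      rw [div_self h0, add_comm]
  have h5 : ∀ s : k, quadraticChar k s * (if s = a then (Fintype.card k : ℤ) - 1 else -1) =
      (if s = a then quadraticChar k a * (Fintype.card k : ℤ) else 0) - quadraticChar k s := by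
    intro s
    split_ifs with h
    · rw [h]
      ring
    · ring
  rw [h2, Fintype.sum_prod_type]
  simp only [h3, ← mul_sum, sum_quadraticChar_add_mul_add hk, h4, h5]
  rw [sum_sub_distrib, quadraticChar_sum_zero hk, sum_ite_eq' univ a, if_pos (mem_univ _), sub_zero,
    ← mul_assoc, ← sq, quadraticChar_sq_one h0, one_mul]

theorem monicSum_evalQuadraticChar_eq_zero (hk : ringChar k ≠ 2) {a : k} (h0 : a ≠ 0) (h1 : a ≠ 1)
    {d : ℕ} (hd : 3 ≤ d) : monicSum (evalQuadraticChar a) d = 0 := by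
  obtain ⟨d, rfl⟩ := Nat.exists_eq_add_of_le' hd
  set H : k[X] := X * (X - 1) * X ^ d with hH
  have hH0 : H.eval 0 = 0 := by simp [hH]
  have hH1 : H.eval 1 = 0 := by simp [hH]
  have hHa : H.eval a ≠ 0 := by simp [hH, h0, sub_ne_zero.2 h1]
  have hdeg : ∀ t : k, (C t * H).degree < (d + 3 : ℕ) := by
    intro t
    have : (C t * H).natDegree ≤ d + 2 := by
      rw [hH]
      compute_degree
      omega
    refine (degree_le_natDegree).trans_lt ?_
    exact_mod_cast this.trans_lt (by omega)
  have hmem : ∀ t : k, ∀ g ∈ monicFinset k (d + 3), g + C t * H ∈ monicFinset k (d + 3) := by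
    intro t g hg
    obtain ⟨hm, hgd⟩ := mem_monicFinset.1 hg
    have hlt : (C t * H).degree < g.degree := by
      rw [degree_eq_natDegree hm.ne_zero, hgd]
      exact hdeg t
    refine mem_monicFinset.2 ⟨hm.add_of_left hlt, ?_⟩
    rw [natDegree_add_eq_left_of_degree_lt hlt, hgd]
  have htrans : ∀ t : k, ∑ g ∈ monicFinset k (d + 3), evalQuadraticChar a (g + C t * H) =
      monicSum (evalQuadraticChar a) (d + 3) := by
    intro t
    refine sum_nbij' (fun g => g + C t * H) (fun g => g + C (-t) * H) (hmem t) (hmem (-t)) ?_ ?_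
      fun _ _ => rfl
    · intro g _
      rw [map_neg, add_assoc, neg_mul, add_neg_cancel, add_zero]
    · intro g _
      rw [map_neg, add_assoc, neg_mul, neg_add_cancel, add_zero]
  have hzero : ∑ t : k, ∑ g ∈ monicFinset k (d + 3), evalQuadraticChar a (g + C t * H) = 0 := by
    rw [sum_comm]
    refine sum_eq_zero fun g _ => ?_
    simp only [evalQuadraticChar_apply, eval_add, eval_mul, eval_C, hH0, hH1, mul_zero, add_zero]
    simp only [map_mul]
    rw [← mul_sum, mul_eq_zero]
    right
    rw [← quadraticChar_sum_zero hk,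
      ← ((Equiv.mulRight₀ (H.eval a) hHa).trans (Equiv.addLeft (g.eval a))).sum_comp
        fun x => quadraticChar k x]
    rfl
  simp only [htrans, sum_const, card_univ, nsmul_eq_mul] at hzero
  exact (mul_eq_zero.1 hzero).resolve_left (Nat.cast_ne_zero.2 Fintype.card_ne_zero)

theorem primePowerSum_evalQuadraticChar_eq (hk : ringChar k ≠ 2) {a : k} (h0 : a ≠ 0) (h1 : a ≠ 1)
    {R : Type*} [CommRing R] {β γ : R}
    (hadd : β + γ = -(primePowerSum (evalQuadraticChar a) 1 : ℤ))
    (hmul : β * γ = Fintype.card k) {r : ℕ} (hr : 1 ≤ r) :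
    ((primePowerSum (evalQuadraticChar a) r : ℤ) : R) = -(β ^ r + γ ^ r) := by
  set S := primePowerSum (evalQuadraticChar a) with hS
  have hN := natCast_mul_monicSum (evalQuadraticChar a)
  have ha1 : monicSum (evalQuadraticChar a) 1 = S 1 := by
    have := hN 1
    simpa [monicSum_zero] using this
  have hS2 : S 2 = 2 * Fintype.card k - S 1 ^ 2 := by
    have := hN 2
    rw [monicSum_two_evalQuadraticChar hk h0 h1, sum_Icc_succ_top (by omega), Icc_self,
      sum_singleton, ha1, Nat.sub_self, monicSum_zero] at this
    push_cast at this
    linear_combination -this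
  have hrec : ∀ d, S (d + 3) = -S 1 * S (d + 2) - Fintype.card k * S (d + 1) := by
    intro d
    have := hN (d + 3)
    rw [monicSum_evalQuadraticChar_eq_zero hk h0 h1 (by omega), sum_Icc_succ_top (by omega),
      sum_Icc_succ_top (by omega), sum_Icc_succ_top (by omega), sum_eq_zero, Nat.sub_self,
      show d + 2 + 1 - (d + 1 + 1) = 1 by omega, show d + 2 + 1 - (d + 1) = 2 by omega,
      monicSum_zero, ha1, monicSum_two_evalQuadraticChar hk h0 h1] at this
    · linear_combination -this
    · intro m hm
      rw [monicSum_evalQuadraticChar_eq_zero hk h0 h1, mul_zero]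
      have := (mem_Icc.1 hm).2
      omega
  have hS1 : ((S 1 : ℤ) : R) = -(β + γ) := by rw [hadd, neg_neg]
  have key : ∀ n, ((S (n + 1) : ℤ) : R) = -(β ^ (n + 1) + γ ^ (n + 1)) ∧
      ((S (n + 2) : ℤ) : R) = -(β ^ (n + 2) + γ ^ (n + 2)) := by
    intro n
    induction n with
    | zero =>
      refine ⟨by simpa using hS1, ?_⟩
      rw [zero_add, hS2]
      push_cast
      rw [hS1, ← hmul]
      ring
    | succ n ih =>
      refine ⟨ih.2, ?_⟩
      rw [hrec]
      push_cast
      rw [hS1, ih.1, ih.2, ← hmul]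
      ring
  obtain ⟨n, rfl⟩ := Nat.exists_eq_add_of_le' hr
  exact (key n).1

end LegendreLFunction

section Legendre

theorem sum_quadraticChar_mul_one_add_mul {K : Type*} [Field K] [Fintype K] [DecidableEq K]
    (l : K) : ∑ x : K, quadraticChar K (x * ((1 + x) * (1 + l * x))) =
      ∑ y : K, quadraticChar K ((0 - y) * (1 - y) * (l - y)) := by
  rw [← ((Equiv.inv K).trans (Equiv.neg K)).sum_comp
    fun y => quadraticChar K ((0 - y) * (1 - y) * (l - y))]
  refine sum_congr rfl fun x _ => ?_
  rw [Equiv.trans_apply, Equiv.inv_apply, Equiv.neg_apply]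
  by_cases hx : x = 0
  · simp [hx]
  · have : x * ((1 + x) * (1 + l * x)) =
        (x ^ 2) ^ 2 * ((0 - -x⁻¹) * (1 - -x⁻¹) * (l - -x⁻¹)) := by
      field_simp
      ring
    rw [this, map_mul, quadraticChar_sq_one' (pow_ne_zero 2 hx), one_mul]

theorem coeff_one_add_X_mul_one_add_C_mul_X_pow {R : Type*} [CommRing R] (l : R) (a : ℕ) :
    (((1 + X) * (1 + C l * X) : R[X]) ^ a).coeff a =
      ∑ j ∈ range (a + 1), (Nat.choose a j : R) ^ 2 * l ^ j := by
  have h : (1 + C l * X : R[X]) ^ a = ((1 + X) ^ a).comp (C l * X) := by simp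
  rw [mul_pow, mul_comm, h, coeff_mul, Nat.sum_antidiagonal_eq_sum_range_succ_mk]
  refine sum_congr rfl fun j hj => ?_
  rw [comp_C_mul_X_coeff, coeff_one_add_X_pow, coeff_one_add_X_pow,
    Nat.choose_symm (Nat.lt_succ_iff.1 (mem_range.1 hj))]
  ring

theorem natDegree_prod_expand_pow_le {R : Type*} [CommRing R] {p : ℕ} (hp : 1 ≤ p) {F : R[X]}
    {d : ℕ} (hF : F.natDegree ≤ d) (m r : ℕ) :
    (∏ i ∈ range r, expand R (p ^ i) (F ^ m)).natDegree * (p - 1) ≤ m * d * (p ^ r - 1) := by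
  have h : (∏ i ∈ range r, expand R (p ^ i) (F ^ m)).natDegree ≤ ∑ i ∈ range r, m * d * p ^ i := by
    refine (natDegree_prod_le _ _).trans (sum_le_sum fun i _ => ?_)
    rw [natDegree_expand]
    exact Nat.mul_le_mul_right _ (natDegree_pow_le_of_le m hF)
  rw [← mul_sum] at h
  calc _ ≤ m * d * (∑ i ∈ range r, p ^ i) * (p - 1) := Nat.mul_le_mul_right _ h
    _ = _ := by rw [mul_assoc, geom_sum_mul_of_one_le hp]

theorem natCast_LCount {p : ℕ} [Fact p.Prime] (hp : p ≠ 2) (lam : ℤ_[p]) :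
    (LCount p lam : ℤ) = p + 1 + ∑ x : ZMod p,
      quadraticChar (ZMod p) (x * (x - 1) * (x - PadicInt.toZMod lam)) := by
  have h : ∀ x : ZMod p, ((#{y : ZMod p | y ^ 2 = x * (x - 1) * (x - PadicInt.toZMod lam)} : ℕ) : ℤ)
      = quadraticChar (ZMod p) (x * (x - 1) * (x - PadicInt.toZMod lam)) + 1 := by
    intro x
    rw [← quadraticChar_card_sqrts ((ZMod.ringChar_zmod_n p).trans_ne hp)]
    congr 2
    ext
    simp
  rw [LCount, card_filter, Fintype.sum_prod_type]
  simp only [← card_filter]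
  push_cast
  rw [sum_congr rfl fun x _ => h x, sum_add_distrib, sum_const, card_univ, ZMod.card]
  simp
  ring

theorem primePowerSum_one_legendre {p : ℕ} [Fact p.Prime] (hp : p ≠ 2) (lam : ℤ_[p]) :
    primePowerSum (evalQuadraticChar (PadicInt.toZMod lam)) 1 =
      -((-1) ^ ((p - 1) / 2) * (p + 1 - LCount p lam)) := by
  have hchar : ringChar (ZMod p) ≠ 2 := (ZMod.ringChar_zmod_n p).trans_ne hp
  have hodd := (Fact.out : p.Prime).mod_two_eq_one_iff_ne_two.2 hp
  have h := primePowerSum_evalQuadraticChar hchar (PadicInt.toZMod lam) (ZMod p)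
  rw [Module.finrank_self] at h
  have hneg : quadraticChar (ZMod p) (-1) = (-1) ^ ((p - 1) / 2) := by
    rw [quadraticChar_neg_one hchar, ZMod.card, ZMod.χ₄_eq_neg_one_pow hodd]
    congr 1
    omega
  rw [h, natCast_LCount hp, ← hneg, show (p + 1 - (p + 1 + ∑ x : ZMod p,
      quadraticChar (ZMod p) (x * (x - 1) * (x - PadicInt.toZMod lam))) : ℤ) = -∑ x : ZMod p,
      quadraticChar (ZMod p) (x * (x - 1) * (x - PadicInt.toZMod lam)) by ring, mul_neg, neg_neg,
    mul_sum]
  refine sum_congr rfl fun x _ => ?_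
  rw [← map_mul, Algebra.algebraMap_self_apply]
  congr 1
  ring

/-- The trace of the twisted Cartier operators of the Legendre family, expressed through the
`p`-adic roots of the Frobenius polynomial. -/
theorem pow_dvd_sum_coeff_sub_pow_legendre {p : ℕ} [Fact p.Prime] (hp : p ≠ 2) {lam : ℤ_[p]}
    (h0 : PadicInt.toZMod lam ≠ 0) (h1 : PadicInt.toZMod lam ≠ 1) {β γ : ℤ_[p]}
    (hadd : β + γ = ((-1) ^ ((p - 1) / 2) * (p + 1 - LCount p lam) : ℤ)) (hmul : β * γ = p)
    (hβ : IsUnit β) {M k r : ℕ} (hk0 : 1 ≤ k) (hk : p ^ M = 2 * k + 1) (hr : 1 ≤ r)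
    (hrM : r ≤ M + 1) :
    (p : ℤ_[p]) ^ r ∣ (∑ j ∈ range (3 * k + 1), (∏ i ∈ range r, expand _ (p ^ i)
      (((1 + X) * (1 + C lam * X)) ^ ((p - 1) / 2 * p ^ M))).coeff
        ((p ^ r - 1) * j + (p ^ r - 1) / 2)) - β ^ r := by
  classical
  have hpp : p.Prime := Fact.out
  have hchar : ringChar (ZMod p) ≠ 2 := (ZMod.ringChar_zmod_n p).trans_ne hp
  have hodd := hpp.mod_two_eq_one_iff_ne_two.2 hp
  set F : ℤ_[p][X] := (1 + X) * (1 + C lam * X) with hF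
  have hFdeg : F.natDegree ≤ 2 := by
    rw [hF]
    compute_degree
  let K := GaloisField p r
  have : Fintype K := Fintype.ofFinite K
  have hfin : Module.finrank (ZMod p) K = r := GaloisField.finrank p (by omega)
  have hcard : Fintype.card K = p ^ r := by
    rw [← Nat.card_eq_fintype_card]
    exact GaloisField.card p r (by omega)
  have hpr : 0 < p ^ r - 1 := Nat.sub_pos_of_lt (Nat.one_lt_pow (by omega) hpp.one_lt)
  set f : ℤ_[p] →+* K := (algebraMap (ZMod p) K).comp PadicInt.toZMod with hf
  have hdeg : (∏ i ∈ range r, expand _ (p ^ i) (F ^ ((p - 1) / 2 * p ^ M))).natDegree <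
      (p ^ r - 1) * (3 * k + 1) := by
    have h2 := natDegree_prod_expand_pow_le hpp.one_le hFdeg ((p - 1) / 2 * p ^ M) r
    obtain ⟨h, hh⟩ : ∃ h, p - 1 = h * 2 := ⟨(p - 1) / 2, by omega⟩
    have hpos : 0 < p - 1 := Nat.sub_pos_of_lt hpp.one_lt
    refine lt_of_mul_lt_mul_right (h2.trans_lt ?_) (Nat.zero_le (p - 1))
    rw [hh, Nat.mul_div_cancel _ two_pos, hk]
    calc h * (2 * k + 1) * 2 * (p ^ r - 1) = (p ^ r - 1) * (2 * k + 1) * (h * 2) := by ring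
      _ < (p ^ r - 1) * (3 * k + 1) * (h * 2) :=
        Nat.mul_lt_mul_of_pos_right (Nat.mul_lt_mul_of_pos_left (by omega) hpr) (hh ▸ hpos)
  have hmain := pow_dvd_sum_coeff_sub_quadraticChar hp hcard f F M hdeg
  have hsum : (∑ x : K, quadraticChar K (x * F.eval₂ f x) : ℤ) =
      primePowerSum (evalQuadraticChar (PadicInt.toZMod lam)) r := by
    have h2 := primePowerSum_evalQuadraticChar hchar (PadicInt.toZMod lam) K
    rw [hfin, ← sum_quadraticChar_mul_one_add_mul] at h2
    rw [h2]
    refine sum_congr rfl fun x _ => ?_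
    simp [hF, hf, eval₂_mul]
  have hS := primePowerSum_evalQuadraticChar_eq hchar h0 h1 (β := β) (γ := γ)
    (by rw [primePowerSum_one_legendre hp, hadd]; push_cast; ring) (by rw [hmul, ZMod.card]) hr
  rw [hsum, hS, Nat.cast_pred (pow_pos hpp.pos r), Nat.cast_pow] at hmain
  have hγ : (p : ℤ_[p]) ^ r ∣ γ ^ r := by
    refine pow_dvd_pow_of_dvd ?_ r
    rw [← hmul]
    exact hβ.mul_left_dvd.2 dvd_rfl
  have h3 := ((pow_dvd_pow (p : ℤ_[p]) hrM).trans hmain).neg_right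
  set t := ∑ j ∈ range (3 * k + 1), (∏ i ∈ range r, expand _ (p ^ i)
      (F ^ ((p - 1) / 2 * p ^ M))).coeff ((p ^ r - 1) * j + (p ^ r - 1) / 2)
  have h4 : t - β ^ r = (p : ℤ_[p]) ^ r * t + γ ^ r + -(((p : ℤ_[p]) ^ r - 1) * t -
      -(β ^ r + γ ^ r)) := by ring
  rw [h4]
  exact dvd_add (dvd_add (dvd_mul_right _ _) hγ) h3

end Legendre

theorem stmt12 (p : ℕ) [Fact p.Prime] (hp : Odd p) (lam : ℤ_[p])
    (h0 : PadicInt.toZMod lam ≠ 0) (h1 : PadicInt.toZMod lam ≠ 1)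
    (A : ℤ) (hA : A = (p : ℤ) + 1 - LCount p lam) (hord : ¬ (p : ℤ) ∣ A)
    (β : ℤ_[p]) (hβ : ‖β‖ = 1) (hroot : β ^ 2 - (A : ℤ_[p]) * β + (p : ℤ_[p]) = 0) :
    ∀ s : ℕ, 1 ≤ s →
      (p : ℤ_[p]) ^ s ∣
        ((∑ j ∈ range ((p ^ s - 1) / 2 + 1),
              (Nat.choose ((p ^ s - 1) / 2) j : ℤ_[p]) ^ 2 * lam ^ j)
          - (-1) ^ ((p - 1) / 2) * β *
              ∑ j ∈ range ((p ^ (s - 1) - 1) / 2 + 1),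
                (Nat.choose ((p ^ (s - 1) - 1) / 2) j : ℤ_[p]) ^ 2 * lam ^ j) := by
  intro s hs
  obtain ⟨n, rfl⟩ := Nat.exists_eq_add_of_le' hs
  have hpp : p.Prime := Fact.out
  have hp2 : p ≠ 2 := by
    rintro rfl
    exact absurd hp (by decide)
  obtain ⟨k, hk⟩ : Odd (p ^ (n + 1)) := hp.pow
  have hk0 : 1 ≤ k := by
    have := Nat.one_lt_pow (n := n + 1) (by omega) hpp.one_lt
    omega
  have hu : IsUnit ((-1) ^ ((p - 1) / 2) * β) :=
    ((isUnit_one.neg).pow _).mul (PadicInt.isUnit_iff.2 hβ)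
  have hsq : ((-1 : ℤ_[p]) ^ ((p - 1) / 2)) ^ 2 = 1 := by
    rw [← pow_mul, mul_comm, pow_mul, neg_one_sq, one_pow]
  have h := dwork_congr_of_coeff (h := (p - 1) / 2) (by have := Nat.odd_iff.1 hp; omega) hk
    (F := (1 + X) * (1 + C lam * X)) (by compute_degree) (by simp [mul_coeff_zero]) hu
    fun r hr hrn => pow_dvd_sum_coeff_sub_pow_legendre hp2 h0 h1
      (γ := (-1) ^ ((p - 1) / 2) * A - (-1) ^ ((p - 1) / 2) * β)
      (by rw [← hA]; push_cast; ring)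
      (by linear_combination (A * β - β ^ 2) * hsq - hroot) hu hk0 hk hr hrn
  rw [coeff_one_add_X_mul_one_add_C_mul_X_pow, coeff_one_add_X_mul_one_add_C_mul_X_pow] at h
  exact h
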